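/- For every integer k ≥ 3, every graph H with k vertices and at least one edge, and every ε > 0, there exists n₀ such that every graph G on n ≥ n₀ vertices with minimum degree at least (1 - 1/(9k¹⁰))·(n-1) satisfies ν_H(G) ≥ (1-ε)·e(G)/e(H). -/

import Mathlib

/-- `c` is a copy of `H` in `G`, i.e. a subgraph of `G` isomorphic to `H`. -/
def SimpleGraph.Subgraph.IsCopy {α β : Type*} {G : SimpleGraph α} (c : G.Subgraph)
    (H : SimpleGraph β) : Prop :=
  Nonempty (c.coe ≃g H)

/-!
Start with the uniform weight on the `k`-cliques of `G`. As `G` is nearly complete, every edge gets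
nearly the right total weight, and the error is repaired edge by edge: some signed combination of
the `k`-cliques inside a `(k + 2)`-clique covers a chosen edge with weight `1` and every other edge
with weight `0`. Spreading the corrections over all `(k + 2)`-cliques through the edge keeps all the
weights nonnegative and of order `n ^ (2 - k)`, so this is a fractional decomposition of `G` into
`k`-cliques, and any two edges lie together in cliques of total weight `O(1 / n)`. Replacing each
clique by the copies of `H` on its vertices gives a fractional decomposition into copies of `H`:
a perfect fractional matching with small codegrees in the hypergraph whose vertices are the edges of
`G` and whose hyperedges are the copies of `H`. The Rödl nibble turns it into an almost perfect
matching, that is, a packing which uses almost all the edges of `G`.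
-/

section Packing

open Finset

/-! ### The Rödl nibble -/

section Nibble

variable {α ι : Type*} [DecidableEq α] (E : ι → Finset α) (w : ι → ℝ) (J : Finset ι)

/-- The weighted degree of a vertex `v` of the hypergraph with edges `E j`, `j ∈ J`, of weight
`w j`. -/
def weightedDegree (v : α) : ℝ := ∑ j ∈ J with v ∈ E j, w j

/-- The total weight of the hyperedges through two distinct vertices `u` and `v`; it is `0` for
`u = v`, so that sums over pairs of vertices need no side condition. -/
def weightedCodegree (u v : α) : ℝ := ∑ j ∈ J with (u, v) ∈ (E j).offDiag, w j

/-- The sum of the weighted codegrees of `v` with the vertices of `A`: up to multiplicities, the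
degree that `v` loses when all the hyperedges meeting `A` are discarded. -/
def setCodegree (A : Finset α) (v : α) : ℝ := ∑ u ∈ A, weightedCodegree E w J u v

/-- The squared deviation of the weighted degrees on `S` from the target degree `D`, the quantity
controlled along the nibble. -/
def degreeDeviation (S : Finset α) (D : ℝ) : ℝ := ∑ v ∈ S, (weightedDegree E w J v - D) ^ 2

/-- The weights `w j ≥ 0` form a fractional matching of the `r`-uniform hypergraph `E j`, `j ∈ J`,
on the vertex set `S` in which any two vertices have weighted codegree at most `δ`. -/
structure IsSpreadFractionalMatching (S : Finset α) (r : ℕ) (δ : ℝ) : Prop where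
  nonneg : ∀ j ∈ J, 0 ≤ w j
  subset : ∀ j ∈ J, E j ⊆ S
  card_eq : ∀ j ∈ J, #(E j) = r
  degree_le_one : ∀ v ∈ S, weightedDegree E w J v ≤ 1
  codegree_le : ∀ u ∈ S, ∀ v ∈ S, weightedCodegree E w J u v ≤ δ

variable {E w J}

lemma sum_weightedDegree (A : Finset α) :
    ∑ v ∈ A, weightedDegree E w J v = ∑ j ∈ J, w j * #(A ∩ E j) := by
  simp only [weightedDegree, sum_filter]
  rw [sum_comm]
  refine sum_congr rfl fun j _ ↦ ?_
  rw [← sum_filter, sum_const, nsmul_eq_mul, mul_comm, filter_mem_eq_inter]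

lemma weightedCodegree_comm (u v : α) :
    weightedCodegree E w J u v = weightedCodegree E w J v u := by
  simp only [weightedCodegree, mem_offDiag, and_left_comm, ne_comm]

lemma weightedDegree_filter_add_filter_not (p : ι → Prop) [DecidablePred p] (v : α) :
    weightedDegree E w {j ∈ J | p j} v + weightedDegree E w {j ∈ J | ¬p j} v =
      weightedDegree E w J v := by
  simp only [weightedDegree, filter_comm p, filter_comm (fun j ↦ ¬p j),
    sum_filter_add_sum_filter_not]

lemma weightedDegree_filter_not_disjoint (A : Finset α) (v : α) :
    weightedDegree E w {j ∈ J | ¬Disjoint (E j) A} v =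
      ∑ j ∈ J with v ∈ E j, w j * if Disjoint (E j) A then 0 else 1 := by
  rw [weightedDegree, filter_comm, sum_filter]
  exact sum_congr rfl fun j _ ↦ by split_ifs <;> simp

lemma one_le_card_inter_of_not_disjoint {s t : Finset α} (hst : ¬Disjoint s t) :
    (1 : ℝ) ≤ #(t ∩ s) := by
  rw [not_disjoint_iff_nonempty_inter, inter_comm, ← card_pos] at hst
  exact_mod_cast hst

lemma setCodegree_eq_sum (A : Finset α) (v : α) :
    setCodegree E w J A v = ∑ j ∈ J with v ∈ E j, w j * #((A ∩ E j).erase v) := by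
  simp only [setCodegree, weightedCodegree, sum_filter]
  rw [sum_comm]
  refine sum_congr rfl fun j _ ↦ ?_
  by_cases hv : v ∈ E j
  · rw [if_pos hv, ← sum_filter, sum_const, nsmul_eq_mul, mul_comm]
    congr 3
    ext u
    simp only [mem_filter, mem_offDiag, mem_erase, mem_inter]
    tauto
  · simp [hv]

lemma setCodegree_eq_sum_of_notMem {A : Finset α} {v : α} (hv : v ∉ A) :
    setCodegree E w J A v = ∑ j ∈ J with v ∈ E j, w j * #(A ∩ E j) := by
  rw [setCodegree_eq_sum]
  refine sum_congr rfl fun j _ ↦ ?_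
  rw [erase_eq_of_notMem fun h ↦ hv (mem_inter.1 h).1]

lemma sum_setCodegree (A : Finset α) :
    ∑ v ∈ A, setCodegree E w J A v = ∑ j ∈ J, w j * (#(A ∩ E j) * (#(A ∩ E j) - 1 : ℝ)) := by
  simp only [setCodegree_eq_sum, sum_filter]
  rw [sum_comm]
  refine sum_congr rfl fun j _ ↦ ?_
  rw [← sum_filter, filter_mem_eq_inter, sum_congr rfl fun v hv ↦ by
    rw [cast_card_erase_of_mem (R := ℝ) hv], sum_const, nsmul_eq_mul]
  ring

namespace IsSpreadFractionalMatching

variable {S : Finset α} {r : ℕ} {δ : ℝ} (h : IsSpreadFractionalMatching E w J S r δ)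
include h

lemma weightedDegree_nonneg (v : α) : 0 ≤ weightedDegree E w J v :=
  sum_nonneg fun j hj ↦ h.nonneg j (mem_filter.1 hj).1

lemma weightedCodegree_nonneg (u v : α) : 0 ≤ weightedCodegree E w J u v :=
  sum_nonneg fun j hj ↦ h.nonneg j (mem_filter.1 hj).1

lemma setCodegree_nonneg (A : Finset α) (v : α) : 0 ≤ setCodegree E w J A v :=
  sum_nonneg fun u _ ↦ h.weightedCodegree_nonneg u v

lemma setCodegree_le {A : Finset α} (hA : A ⊆ S) {v : α} (hv : v ∈ S) :
    setCodegree E w J A v ≤ #A * δ := by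
  rw [← nsmul_eq_mul]
  exact sum_le_card_nsmul A _ δ fun u hu ↦ h.codegree_le u (hA hu) v hv

lemma setCodegree_self {v : α} :
    setCodegree E w J S v = (r - 1) * weightedDegree E w J v := by
  rw [setCodegree_eq_sum, weightedDegree, mul_sum]
  refine sum_congr rfl fun j hj ↦ ?_
  obtain ⟨hjJ, hvj⟩ := mem_filter.1 hj
  rw [inter_eq_right.2 (h.subset j hjJ), cast_card_erase_of_mem hvj, h.card_eq j hjJ, mul_comm]

lemma sum_weightedDegree_eq : ∑ v ∈ S, weightedDegree E w J v = r * ∑ j ∈ J, w j := by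
  rw [sum_weightedDegree, mul_sum]
  refine sum_congr rfl fun j hj ↦ ?_
  rw [inter_eq_right.2 (h.subset j hj), h.card_eq j hj, mul_comm]

lemma sum_setCodegree_le {A : Finset α} (hA : A ⊆ S) (hr : 1 ≤ r) :
    ∑ v ∈ S, setCodegree E w J A v ≤ #A * (r - 1) := by
  have hr' : (0 : ℝ) ≤ r - 1 := sub_nonneg.2 (by exact_mod_cast hr)
  simp only [setCodegree]
  rw [sum_comm, ← nsmul_eq_mul]
  refine sum_le_card_nsmul A _ _ fun u hu ↦ ?_
  calc ∑ v ∈ S, weightedCodegree E w J u v = setCodegree E w J S u :=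
        sum_congr rfl fun v _ ↦ weightedCodegree_comm u v
    _ = (r - 1) * weightedDegree E w J u := h.setCodegree_self
    _ ≤ r - 1 := mul_le_of_le_one_right hr' (h.degree_le_one u (hA hu))

lemma restrict {S' : Finset α} (hS : S' ⊆ S) :
    IsSpreadFractionalMatching E w {j ∈ J | E j ⊆ S'} S' r δ where
  nonneg _ hj := h.nonneg _ (mem_filter.1 hj).1
  subset _ hj := (mem_filter.1 hj).2
  card_eq _ hj := h.card_eq _ (mem_filter.1 hj).1
  degree_le_one v hv := (sum_le_sum_of_subset_of_nonneg
    (filter_subset_filter _ (filter_subset _ _))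
    fun _ hj _ ↦ h.nonneg _ (mem_filter.1 hj).1).trans (h.degree_le_one v (hS hv))
  codegree_le u hu v hv := (sum_le_sum_of_subset_of_nonneg
    (filter_subset_filter _ (filter_subset _ _))
    fun _ hj _ ↦ h.nonneg _ (mem_filter.1 hj).1).trans (h.codegree_le u (hS hu) v (hS hv))

lemma weightedDegree_filter_not_disjoint_le {A : Finset α} {v : α} (hv : v ∉ A) :
    weightedDegree E w {j ∈ J | ¬Disjoint (E j) A} v ≤ setCodegree E w J A v := by
  rw [setCodegree_eq_sum_of_notMem hv, weightedDegree_filter_not_disjoint]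
  refine sum_le_sum fun j hj ↦ mul_le_mul_of_nonneg_left ?_ (h.nonneg j (mem_filter.1 hj).1)
  split_ifs with hdis
  · positivity
  · exact one_le_card_inter_of_not_disjoint hdis

-- The set codegree overcounts the loss of degree only through the hyperedges meeting `A` at least
-- twice, and `s - 1 ≤ s * (s - 1)` for `s = #(A ∩ E j)`.
lemma sum_setCodegree_sub_weightedDegree_le (A : Finset α) :
    ∑ v ∈ S \ A, (setCodegree E w J A v - weightedDegree E w {j ∈ J | ¬Disjoint (E j) A} v) ≤
      r * ∑ v ∈ A, setCodegree E w J A v := by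
  have hloss : ∀ v ∈ S \ A,
      setCodegree E w J A v - weightedDegree E w {j ∈ J | ¬Disjoint (E j) A} v =
        ∑ j ∈ J with v ∈ E j, w j * (#(A ∩ E j) - if Disjoint (E j) A then 0 else 1 : ℝ) := by
    intro v hv
    simp only [setCodegree_eq_sum_of_notMem (mem_sdiff.1 hv).2, weightedDegree_filter_not_disjoint,
      mul_sub, sum_sub_distrib]
  rw [sum_congr rfl hloss, sum_setCodegree, mul_sum]
  simp only [sum_filter]
  rw [sum_comm]
  refine sum_le_sum fun j hj ↦ ?_
  have hw := h.nonneg j hj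
  have hcard : (#((S \ A) ∩ E j) : ℝ) ≤ r := by
    rw [← h.card_eq j hj]
    exact_mod_cast card_le_card inter_subset_right
  rw [← sum_filter, sum_const, filter_mem_eq_inter, nsmul_eq_mul]
  split_ifs with hdis
  · simp [inter_comm A, disjoint_iff_inter_eq_empty.1 hdis]
  · have hone := one_le_card_inter_of_not_disjoint hdis
    have hsub := sub_nonneg.2 hone
    gcongr
    exact le_mul_of_one_le_left hsub hone

lemma abs_weightedDegree_sub_le_one {v : α} (hv : v ∈ S) {D : ℝ} (hD₀ : 0 ≤ D) (hD₁ : D ≤ 1) :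
    |weightedDegree E w J v - D| ≤ 1 :=
  abs_le.2 ⟨by linarith [h.weightedDegree_nonneg v], by linarith [h.degree_le_one v hv]⟩

lemma sq_weightedDegree_sdiff_sub_le {A : Finset α} (hA : A ⊆ S) {v : α} (hv : v ∈ S \ A)
    {D q : ℝ} (hD₀ : 0 ≤ D) (hD₁ : D ≤ 1) (hq : 0 ≤ q) :
    (weightedDegree E w {j ∈ J | E j ⊆ S \ A} v - (D - q)) ^ 2 ≤
      (weightedDegree E w J v - D) ^ 2 -
        2 * ((weightedDegree E w J v - D) * (setCodegree E w J A v - q)) +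
        (2 * (setCodegree E w J A v - weightedDegree E w {j ∈ J | ¬Disjoint (E j) A} v) +
          #A * δ * setCodegree E w J A v + q ^ 2) := by
  obtain ⟨hvS, hvA⟩ := mem_sdiff.1 hv
  have hsplit := weightedDegree_filter_add_filter_not (E := E) (w := w) (J := J)
    (fun j ↦ Disjoint (E j) A) v
  have hx := (abs_le.1 (h.abs_weightedDegree_sub_le_one hvS hD₀ hD₁)).2
  have ht := h.setCodegree_le hA hvS
  have hct := h.weightedDegree_filter_not_disjoint_le hvA
  rw [filter_congr fun j hj ↦ show E j ⊆ S \ A ↔ Disjoint (E j) A by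
    simp [subset_sdiff, h.subset j hj]]
  set x := weightedDegree E w J v - D
  set t := setCodegree E w J A v
  set c := weightedDegree E w {j ∈ J | ¬Disjoint (E j) A} v
  have hc₀ : 0 ≤ c := sum_nonneg fun j hj ↦
    h.nonneg j (mem_filter.1 (mem_filter.1 hj).1).1
  have hc_sq : c * c ≤ #A * δ * t :=
    mul_le_mul (hct.trans ht) hct hc₀ ((h.setCodegree_nonneg A v).trans ht)
  calc _ = (x - (c - q)) ^ 2 := by congr 1; linarith
    _ = x ^ 2 - 2 * (x * (t - q)) + (2 * x * (t - c) + (c * c - 2 * c * q + q ^ 2)) := by ring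
    _ ≤ _ := by nlinarith [mul_nonneg hc₀ hq]

lemma sum_sdiff_sq_sub_le {A : Finset α} (hA : A ⊆ S) (hcard : #A = r) (hr : 1 ≤ r) (hδ : 0 ≤ δ)
    {D q : ℝ} (hD₀ : 0 ≤ D) (hD₁ : D ≤ 1) (hq₀ : 0 ≤ q) (hqδ : q ≤ r ^ 2 * δ) :
    ∑ v ∈ S \ A, ((weightedDegree E w J v - D) ^ 2 -
        2 * ((weightedDegree E w J v - D) * (setCodegree E w J A v - q))) ≤
      degreeDeviation E w J S D -
        2 * ∑ v ∈ S, (weightedDegree E w J v - D) * (setCodegree E w J A v - q) +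
        4 * r ^ 4 * δ := by
  have hr' : (1 : ℝ) ≤ r := by exact_mod_cast hr
  have hon : r * -(2 * (r * δ + q)) ≤ ∑ v ∈ A, ((weightedDegree E w J v - D) ^ 2 -
      2 * ((weightedDegree E w J v - D) * (setCodegree E w J A v - q))) := by
    rw [← nsmul_eq_mul, ← hcard]
    refine card_nsmul_le_sum _ _ _ fun v hv ↦ ?_
    have hx := abs_le.1 (h.abs_weightedDegree_sub_le_one (hA hv) hD₀ hD₁)
    nlinarith [h.setCodegree_le hA (hA hv), h.setCodegree_nonneg A v]
  have hr_sq : (r : ℝ) * (r * δ) ≤ r ^ 4 * δ := by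
    rw [← mul_assoc, ← sq]
    gcongr
    norm_num
  have hr_cub : (r : ℝ) * (r ^ 2 * δ) ≤ r ^ 4 * δ := by
    rw [← mul_assoc, ← pow_succ']
    gcongr
    norm_num
  have hrq : r * q ≤ r * (r ^ 2 * δ) := by gcongr
  rw [degreeDeviation, mul_sum, ← sum_sub_distrib, ← sum_sdiff hA]
  linarith

lemma degreeDeviation_sdiff_le {A : Finset α} (hA : A ⊆ S) (hcard : #A = r) (hr : 1 ≤ r)
    (hδ : 0 ≤ δ) {D q : ℝ} (hD₀ : 0 ≤ D) (hD₁ : D ≤ 1) (hq₀ : 0 ≤ q) (hqS : q * #S ≤ r ^ 2)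
    (hqδ : q ≤ r ^ 2 * δ) :
    degreeDeviation E w {j ∈ J | E j ⊆ S \ A} (S \ A) (D - q) ≤
      degreeDeviation E w J S D -
        2 * ∑ v ∈ S, (weightedDegree E w J v - D) * (setCodegree E w J A v - q) +
        8 * r ^ 4 * δ := by
  have ht := h.setCodegree_nonneg A
  have hr_cub : (r : ℝ) ^ 3 * δ ≤ r ^ 4 * δ := by gcongr <;> norm_num [hr]
  have hloss : ∑ v ∈ S \ A, (setCodegree E w J A v -
      weightedDegree E w {j ∈ J | ¬Disjoint (E j) A} v) ≤ r ^ 3 * δ := by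
    refine (h.sum_setCodegree_sub_weightedDegree_le A).trans ?_
    calc (r : ℝ) * ∑ v ∈ A, setCodegree E w J A v ≤ r * (#A • (#A * δ)) := by
          gcongr
          exact sum_le_card_nsmul _ _ _ fun v hv ↦ h.setCodegree_le hA (hA hv)
      _ = r ^ 3 * δ := by rw [hcard, nsmul_eq_mul]; ring
  have hcodeg : r * δ * ∑ v ∈ S \ A, setCodegree E w J A v ≤ r ^ 3 * δ := by
    calc r * δ * ∑ v ∈ S \ A, setCodegree E w J A v ≤ r * δ * (#A * (r - 1)) := by
          gcongr
          exact (sum_le_sum_of_subset_of_nonneg sdiff_subset fun v _ _ ↦ ht v).trans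
            (h.sum_setCodegree_le hA hr)
      _ ≤ r * δ * (r * r) := by rw [hcard]; gcongr; linarith
      _ = r ^ 3 * δ := by ring
  have hq_sq : #(S \ A) * q ^ 2 ≤ r ^ 4 * δ := by
    calc #(S \ A) * q ^ 2 = q * #(S \ A) * q := by ring
      _ ≤ q * #S * q := by gcongr; exact sdiff_subset
      _ ≤ r ^ 2 * (r ^ 2 * δ) := by gcongr
      _ = r ^ 4 * δ := by ring
  have hoff := sum_le_sum (s := S \ A) fun v hv ↦
    h.sq_weightedDegree_sdiff_sub_le hA hv hD₀ hD₁ hq₀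
  rw [sum_add_distrib, sum_add_distrib, sum_add_distrib, ← mul_sum, ← mul_sum, sum_const,
    nsmul_eq_mul, hcard] at hoff
  have hsum := h.sum_sdiff_sq_sub_le hA hcard hr hδ hD₀ hD₁ hq₀ hqδ
  unfold degreeDeviation at hsum ⊢
  linarith

lemma sum_mul_setCodegree (v : α) :
    ∑ i ∈ J, w i * setCodegree E w J (E i) v =
      ∑ u ∈ S, weightedDegree E w J u * weightedCodegree E w J u v := by
  simp only [setCodegree, weightedDegree, sum_mul, mul_sum]
  exact sum_comm' fun i u ↦ by
    simp only [mem_filter]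
    exact ⟨fun ⟨hi, hu⟩ ↦ ⟨⟨hi, hu⟩, h.subset i hi hu⟩, fun ⟨hi, _⟩ ↦ hi⟩

lemma neg_sum_sum_mul_weightedCodegree_le (hr : 1 ≤ r) (x : α → ℝ) :
    -∑ v ∈ S, x v * ∑ u ∈ S, x u * weightedCodegree E w J u v ≤ (r - 1) * ∑ v ∈ S, x v ^ 2 := by
  have hr' : (0 : ℝ) ≤ r - 1 := sub_nonneg.2 (by exact_mod_cast hr)
  have hdiag : ∑ v ∈ S, ∑ u ∈ S, x v ^ 2 * weightedCodegree E w J u v ≤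
      (r - 1) * ∑ v ∈ S, x v ^ 2 := by
    rw [mul_sum]
    refine sum_le_sum fun v hv ↦ ?_
    rw [← mul_sum, ← setCodegree, h.setCodegree_self, mul_comm]
    exact mul_le_mul_of_nonneg_right (mul_le_of_le_one_right hr' (h.degree_le_one v hv))
      (sq_nonneg _)
  have hsymm : ∑ v ∈ S, ∑ u ∈ S, x u ^ 2 * weightedCodegree E w J u v =
      ∑ v ∈ S, ∑ u ∈ S, x v ^ 2 * weightedCodegree E w J u v := by
    rw [sum_comm]
    simp only [weightedCodegree_comm]
  have hamgm : 0 ≤ ∑ v ∈ S, ∑ u ∈ S, (x u + x v) ^ 2 * weightedCodegree E w J u v :=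
    sum_nonneg fun v _ ↦ sum_nonneg fun u _ ↦
      mul_nonneg (sq_nonneg _) (h.weightedCodegree_nonneg u v)
  have hexpand : ∑ v ∈ S, ∑ u ∈ S, (x u + x v) ^ 2 * weightedCodegree E w J u v =
      ∑ v ∈ S, ∑ u ∈ S, x u ^ 2 * weightedCodegree E w J u v +
        ∑ v ∈ S, ∑ u ∈ S, x v ^ 2 * weightedCodegree E w J u v +
        2 * ∑ v ∈ S, x v * ∑ u ∈ S, x u * weightedCodegree E w J u v := by
    simp only [mul_sum, ← sum_add_distrib]
    exact sum_congr rfl fun v _ ↦ sum_congr rfl fun u _ ↦ by ring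
  linarith

lemma sum_sq_sub_le_card_mul_degreeDeviation (D : ℝ) :
    (r * ∑ j ∈ J, w j - #S * D) ^ 2 ≤ #S * degreeDeviation E w J S D := by
  rw [← h.sum_weightedDegree_eq, ← nsmul_eq_mul, ← sum_const, ← sum_sub_distrib]
  exact sq_sum_le_card_mul_sum_sq

lemma sum_mul_setCodegree_sub (D q : ℝ) (v : α) :
    ∑ i ∈ J, w i * (setCodegree E w J (E i) v - q) =
      (r - 1) * D * weightedDegree E w J v +
        ∑ u ∈ S, (weightedDegree E w J u - D) * weightedCodegree E w J u v -
        q * ∑ i ∈ J, w i := by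
  simp only [mul_sub, sub_mul, sum_sub_distrib, h.sum_mul_setCodegree, ← sum_mul, ← mul_sum]
  rw [← setCodegree, h.setCodegree_self]
  ring

-- With `F` the sum of the deviations `x`, the left-hand side is, up to sign, the sum of
-- `(r - 1) * D * (∑ x ^ 2 - F ^ 2 / #S) ≥ 0` and of the quadratic form of the codegrees at `x`.
lemma neg_sum_mul_sum_setCodegree_sub_le (hr : 1 ≤ r) (hS : S.Nonempty) {D : ℝ} (hD : 0 ≤ D) :
    -∑ i ∈ J, w i * ∑ v ∈ S, (weightedDegree E w J v - D) *
        (setCodegree E w J (E i) v - r * (r - 1) * D / #S) ≤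
      (r - 1) * degreeDeviation E w J S D := by
  set q : ℝ := r * (r - 1) * D / #S with hq
  have hS' : (0 : ℝ) < #S := by exact_mod_cast hS.card_pos
  have hr' : (0 : ℝ) ≤ r - 1 := sub_nonneg.2 (by exact_mod_cast hr)
  have hform := h.neg_sum_sum_mul_weightedCodegree_le hr fun v ↦ weightedDegree E w J v - D
  set F := ∑ v ∈ S, (weightedDegree E w J v - D) with hF
  have hqW : q * ∑ i ∈ J, w i = (r - 1) * D * (D + F / #S) := by
    have hW : r * ∑ i ∈ J, w i = #S * D + F := by
      rw [← h.sum_weightedDegree_eq, hF, sum_sub_distrib, sum_const, nsmul_eq_mul]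
      ring
    rw [hq, div_mul_eq_mul_div, div_eq_iff hS'.ne']
    linear_combination (r - 1) * D * hW - (r - 1) * D * div_mul_cancel₀ F hS'.ne'
  have hvar : 0 ≤ (r - 1) * D * (degreeDeviation E w J S D - F ^ 2 / #S) :=
    mul_nonneg (mul_nonneg hr' hD) <| sub_nonneg.2 <|
      (div_le_iff₀' hS').2 sq_sum_le_card_mul_sum_sq
  have hswap : ∑ i ∈ J, w i * ∑ v ∈ S, (weightedDegree E w J v - D) *
        (setCodegree E w J (E i) v - q) =
      ∑ v ∈ S, (weightedDegree E w J v - D) *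
        ∑ i ∈ J, w i * (setCodegree E w J (E i) v - q) := by
    simp only [mul_sum, mul_left_comm (w _)]
    exact sum_comm
  have hsplit : ∀ v, (weightedDegree E w J v - D) *
      ∑ i ∈ J, w i * (setCodegree E w J (E i) v - q) =
        (r - 1) * D * (weightedDegree E w J v - D) ^ 2 -
          (r - 1) * D * (F / #S) * (weightedDegree E w J v - D) +
          (weightedDegree E w J v - D) *
            ∑ u ∈ S, (weightedDegree E w J u - D) * weightedCodegree E w J u v := by
    intro v
    rw [h.sum_mul_setCodegree_sub D, hqW]
    ring
  rw [hswap, sum_congr rfl fun v _ ↦ hsplit v, sum_add_distrib, sum_sub_distrib, ← mul_sum,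
    ← mul_sum, ← hF]
  unfold degreeDeviation at hvar ⊢
  linear_combination hform + hvar

lemma sum_mul_degreeDeviation_sdiff_le (hr : 1 ≤ r) (hS : S.Nonempty) (hδ : 1 ≤ δ * #S) {D : ℝ}
    (hD₀ : 0 ≤ D) (hD₁ : D ≤ 1) :
    ∑ i ∈ J, w i * degreeDeviation E w {j ∈ J | E j ⊆ S \ E i} (S \ E i)
        (D - r * (r - 1) * D / #S) ≤
      (∑ i ∈ J, w i) * (degreeDeviation E w J S D + 8 * r ^ 4 * δ) +
        2 * r * degreeDeviation E w J S D := by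
  have hS' : (0 : ℝ) < #S := by exact_mod_cast hS.card_pos
  have hr' : (1 : ℝ) ≤ r := by exact_mod_cast hr
  have hδ₀ : 0 ≤ δ := (pos_of_mul_pos_left (one_pos.trans_le hδ) hS'.le).le
  have : (0 : ℝ) ≤ r - 1 := sub_nonneg.2 hr'
  have hnum : r * (r - 1) * D ≤ r ^ 2 := by nlinarith
  have hq₀ : 0 ≤ r * (r - 1) * D / #S := by positivity
  have hqδ : r * (r - 1) * D / #S ≤ r ^ 2 * δ := by
    rw [div_le_iff₀ hS']
    nlinarith
  have hΦ : 0 ≤ degreeDeviation E w J S D := sum_nonneg fun v _ ↦ sq_nonneg _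
  have hneg := h.neg_sum_mul_sum_setCodegree_sub_le hr hS hD₀
  set q : ℝ := r * (r - 1) * D / #S
  have hqS : q * #S ≤ r ^ 2 := by rwa [div_mul_cancel₀ _ hS'.ne']
  calc _ ≤ ∑ i ∈ J, w i * (degreeDeviation E w J S D -
          2 * ∑ v ∈ S, (weightedDegree E w J v - D) * (setCodegree E w J (E i) v - q) +
          8 * r ^ 4 * δ) := sum_le_sum fun i hi ↦ mul_le_mul_of_nonneg_left
        (h.degreeDeviation_sdiff_le (h.subset i hi) (h.card_eq i hi) hr hδ₀ hD₀ hD₁ hq₀ hqS hqδ)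
        (h.nonneg i hi)
    _ = (∑ i ∈ J, w i) * (degreeDeviation E w J S D + 8 * r ^ 4 * δ) -
          2 * ∑ i ∈ J, w i *
            ∑ v ∈ S, (weightedDegree E w J v - D) * (setCodegree E w J (E i) v - q) := by
        rw [sum_mul, mul_sum, ← sum_sub_distrib]
        exact sum_congr rfl fun i _ ↦ by ring
    _ ≤ _ := by linarith

lemma exists_degreeDeviation_sdiff_le (hr : 1 ≤ r) (hS : S.Nonempty) (hδ : 1 ≤ δ * #S) {D : ℝ}
    (hD₀ : 0 < D) (hD₁ : D ≤ 1) (hΦ : degreeDeviation E w J S D ≤ #S * D ^ 2 / 4) :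
    ∃ i ∈ J, degreeDeviation E w {j ∈ J | E j ⊆ S \ E i} (S \ E i)
        (D - r * (r - 1) * D / #S) ≤
      degreeDeviation E w J S D * (1 + 4 * r ^ 2 / (#S * D)) + 8 * r ^ 4 * δ := by
  have hS' : (0 : ℝ) < #S := by exact_mod_cast hS.card_pos
  have : (0 : ℝ) < r := by exact_mod_cast hr
  set W := ∑ i ∈ J, w i with hW
  have hΦ₀ : 0 ≤ degreeDeviation E w J S D := sum_nonneg fun v _ ↦ sq_nonneg _
  have hW_ge : #S * D ≤ 2 * r * W := by
    have hdev : (r * W - #S * D) ^ 2 ≤ (#S * D / 2) ^ 2 :=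
      calc _ ≤ #S * degreeDeviation E w J S D := h.sum_sq_sub_le_card_mul_degreeDeviation D
        _ ≤ #S * (#S * D ^ 2 / 4) := by gcongr
        _ = _ := by ring
    linarith [(abs_le.1 (abs_le_of_sq_le_sq hdev (by positivity))).1]
  have hW₀ : 0 < W := by
    have : 0 < 2 * r * W := (mul_pos hS' hD₀).trans_le hW_ge
    exact pos_of_mul_pos_right this (by positivity)
  by_contra! hlt
  set B := degreeDeviation E w J S D * (1 + 4 * r ^ 2 / (#S * D)) + 8 * r ^ 4 * δ
  have hstrict : W * B < W * (degreeDeviation E w J S D + 8 * r ^ 4 * δ) +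
      2 * r * degreeDeviation E w J S D := by
    refine lt_of_lt_of_le ?_ (h.sum_mul_degreeDeviation_sdiff_le hr hS hδ hD₀.le hD₁)
    obtain ⟨i, hi, hwi⟩ := exists_lt_of_sum_lt (s := J) (f := 0) (g := w) (by simpa using hW₀)
    rw [hW, sum_mul]
    exact sum_lt_sum (fun i hi ↦ mul_le_mul_of_nonneg_left (hlt i hi).le (h.nonneg i hi))
      ⟨i, hi, mul_lt_mul_of_pos_left (hlt i hi) hwi⟩
  have hgain : 2 * r ≤ W * (4 * r ^ 2 / (#S * D)) := by
    rw [mul_div_assoc', le_div_iff₀ (by positivity)]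
    nlinarith
  nlinarith [mul_le_mul_of_nonneg_right hgain hΦ₀]

end IsSpreadFractionalMatching

/-- The target degree after `t` steps of the nibble on `N` vertices. Its recursion is that of the
mean degree: a step discards, in the mean, `r * (r - 1) * D / s` of the degree when the mean degree
is `D` and `s` vertices are uncovered. -/
noncomputable def nibbleDegree (r N t : ℕ) : ℝ :=
  ∏ s ∈ range t, (1 - r * (r - 1) / (N - r * s : ℝ))

lemma nibbleDegree_succ (r N t : ℕ) : nibbleDegree r N (t + 1) =
    nibbleDegree r N t - r * (r - 1) * nibbleDegree r N t / (N - r * t : ℝ) := by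
  rw [nibbleDegree, prod_range_succ, ← nibbleDegree]
  ring

lemma nibbleDegree_factor_bounds {r N s : ℕ} {ε : ℝ} (hr : 1 ≤ r) (hεN : 0 < ε * N)
    (hs : r * s ≤ (1 - ε) * N) :
    0 ≤ r * (r - 1) / (N - r * s : ℝ) ∧ r * (r - 1) / (N - r * s : ℝ) ≤ r ^ 2 / (ε * N) := by
  have hr' : (1 : ℝ) ≤ r := by exact_mod_cast hr
  have hleft : ε * N ≤ N - r * s := by linarith
  have hnum : 0 ≤ r * (r - 1 : ℝ) := mul_nonneg (by positivity) (sub_nonneg.2 hr')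
  exact ⟨div_nonneg hnum (hεN.le.trans hleft),
    div_le_div₀ (by positivity) (by nlinarith) hεN hleft⟩

lemma nibbleDegree_le_one {r N t : ℕ} {ε : ℝ} (hr : 1 ≤ r) (hN : 2 * r ^ 2 ≤ ε * N)
    (ht : r * t ≤ (1 - ε) * N) : nibbleDegree r N t ≤ 1 := by
  have hεN : 0 < ε * N := lt_of_lt_of_le (by positivity) hN
  have hy : r ^ 2 / (ε * N) ≤ 1 := (div_le_one hεN).2 (by nlinarith)
  have hbounds : ∀ s ∈ range t, _ := fun s hs ↦ nibbleDegree_factor_bounds (s := s) hr hεN <| by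
    refine le_trans ?_ ht
    gcongr
    exact (mem_range.1 hs).le
  exact prod_le_one (fun s hs ↦ by linarith [(hbounds s hs).2]) fun s hs ↦ by
    linarith [(hbounds s hs).1]

lemma exp_neg_two_mul_le_one_sub {y : ℝ} (hy₀ : 0 ≤ y) (hy : y ≤ 1 / 2) :
    Real.exp (-(2 * y)) ≤ 1 - y := by
  rw [Real.exp_neg, inv_le_iff_one_le_mul₀ (Real.exp_pos _)]
  nlinarith [Real.add_one_le_exp (2 * y)]

lemma exp_le_nibbleDegree {r N t : ℕ} {ε : ℝ} (hr : 1 ≤ r) (hε : 0 < ε)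
    (hN : 2 * r ^ 2 ≤ ε * N) (ht : r * t ≤ (1 - ε) * N) :
    Real.exp (-(2 * r / ε)) ≤ nibbleDegree r N t := by
  have hεN : 0 < ε * N := lt_of_lt_of_le (by positivity) hN
  have hy : r ^ 2 / (ε * N) ≤ 1 / 2 := by
    rw [div_le_iff₀ hεN]
    linarith
  have hyt : r ^ 2 / (ε * N) * t ≤ r / ε := by
    rw [div_mul_eq_mul_div, div_le_div_iff₀ hεN hε]
    have hrt : (r * t : ℝ) ≤ N := by linarith
    calc (r : ℝ) ^ 2 * t * ε = r * ε * (r * t) := by ring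
      _ ≤ r * ε * N := by gcongr
      _ = r * (ε * N) := by ring
  calc Real.exp (-(2 * r / ε)) ≤ Real.exp (-(2 * (r ^ 2 / (ε * N)))) ^ t := by
        rw [← Real.exp_nat_mul, Real.exp_le_exp]
        linear_combination 2 * hyt
    _ = ∏ s ∈ range t, Real.exp (-(2 * (r ^ 2 / (ε * N)))) := by rw [prod_const, card_range]
    _ ≤ nibbleDegree r N t := by
        refine prod_le_prod (fun _ _ ↦ (Real.exp_pos _).le) fun s hs ↦ ?_
        have hst : (r * s : ℝ) ≤ r * t := by gcongr; exact (mem_range.1 hs).le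
        linarith [exp_neg_two_mul_le_one_sub (by positivity) hy,
          (nibbleDegree_factor_bounds hr hεN (hst.trans ht)).2]

lemma one_add_div_pow_le_exp {C : ℝ} (hC : 0 ≤ C) {N t : ℕ} (ht : t ≤ N) :
    (1 + C / N) ^ t ≤ Real.exp C := by
  rcases Nat.eq_zero_or_pos N with rfl | hN
  · simpa [Nat.le_zero.1 ht] using hC
  calc (1 + C / N) ^ t ≤ Real.exp (C / N) ^ t := by
        gcongr
        linarith [Real.add_one_le_exp (C / N)]
    _ = Real.exp (t / N * C) := by rw [← Real.exp_nat_mul]; ring_nf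
    _ ≤ Real.exp C := by
        gcongr
        refine mul_le_of_le_one_left hC ((div_le_one (by exact_mod_cast hN)).2 ?_)
        exact_mod_cast ht

lemma nibble_error_succ {η C a Φ : ℝ} {N t : ℕ} (hη : 0 ≤ η) (hC : 0 ≤ C) (ha₀ : 0 ≤ a)
    (ha : a ≤ C / N) (hΦ : Φ ≤ η * t * (1 + C / N) ^ t) :
    Φ * (1 + a) + η ≤ η * (t + 1 : ℕ) * (1 + C / N) ^ (t + 1) := by
  have hone : 1 ≤ (1 + C / N) ^ (t + 1) := one_le_pow₀ (le_add_of_nonneg_right (by positivity))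
  calc Φ * (1 + a) + η ≤ η * t * (1 + C / N) ^ t * (1 + C / N) + η := by gcongr
    _ ≤ η * (t + 1 : ℕ) * (1 + C / N) ^ (t + 1) := by
      push_cast
      linear_combination η * hone

namespace IsSpreadFractionalMatching

variable {V : Finset α} {I : Finset ι} {r : ℕ} {δ : ℝ}

lemma cast_card_sdiff_biUnion (h : IsSpreadFractionalMatching E w I V r δ) {M : Finset ι}
    (hMI : M ⊆ I) (hM : (M : Set ι).PairwiseDisjoint E) :
    (#(V \ M.biUnion E) : ℝ) = #V - r * #M := by
  have hsub : M.biUnion E ⊆ V := biUnion_subset.2 fun j hj ↦ h.subset j (hMI hj)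
  rw [cast_card_sdiff hsub, card_biUnion hM, sum_const_nat fun j hj ↦ h.card_eq j (hMI hj)]
  push_cast
  ring

lemma exists_insert_degreeDeviation_le (h : IsSpreadFractionalMatching E w I V r δ) (hr : 1 ≤ r)
    {M : Finset ι} (hMI : M ⊆ I) (hM : (M : Set ι).PairwiseDisjoint E)
    (hS : (V \ M.biUnion E).Nonempty) (hδ : 1 ≤ δ * #(V \ M.biUnion E)) {D : ℝ} (hD₀ : 0 < D)
    (hD₁ : D ≤ 1)
    (hΦ : degreeDeviation E w {j ∈ I | E j ⊆ V \ M.biUnion E} (V \ M.biUnion E) D ≤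
      #(V \ M.biUnion E) * D ^ 2 / 4) :
    ∃ M' ⊆ I, #M' = #M + 1 ∧ (M' : Set ι).PairwiseDisjoint E ∧
      degreeDeviation E w {j ∈ I | E j ⊆ V \ M'.biUnion E} (V \ M'.biUnion E)
          (D - r * (r - 1) * D / #(V \ M.biUnion E)) ≤
        degreeDeviation E w {j ∈ I | E j ⊆ V \ M.biUnion E} (V \ M.biUnion E) D *
          (1 + 4 * r ^ 2 / (#(V \ M.biUnion E) * D)) + 8 * r ^ 4 * δ := by
  classical
  obtain ⟨i, hi, hdev⟩ :=
    (h.restrict sdiff_subset).exists_degreeDeviation_sdiff_le hr hS hδ hD₀ hD₁ hΦ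
  obtain ⟨hiI, hiS⟩ := mem_filter.1 hi
  have hdisj : ∀ j ∈ M, Disjoint (E i) (E j) := fun j hj ↦
    (disjoint_sdiff_self_left.mono_left hiS).mono_right (subset_biUnion_of_mem E hj)
  have hiM : i ∉ M := fun hiM ↦ by
    have hempty := disjoint_self.1 (hdisj i hiM)
    have hcard := h.card_eq i hiI
    rw [hempty, bot_eq_empty, card_empty] at hcard
    omega
  have hset : (V \ M.biUnion E) \ E i = V \ (insert i M).biUnion E := by
    rw [biUnion_insert, union_comm, ← sup_eq_union, sdiff_sdiff_left]
  have hedges : {j ∈ {j ∈ I | E j ⊆ V \ M.biUnion E} | E j ⊆ (V \ M.biUnion E) \ E i} =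
      {j ∈ I | E j ⊆ V \ (insert i M).biUnion E} := by
    rw [filter_filter, hset]
    exact filter_congr fun j _ ↦ and_iff_right_of_imp fun hj ↦
      (hset ▸ hj).trans sdiff_subset
  refine ⟨insert i M, insert_subset hiI hMI, card_insert_of_notMem hiM, ?_, ?_⟩
  · rw [coe_insert]
    exact hM.insert fun j hj _ ↦ hdisj j hj
  · rwa [hedges, hset] at hdev

lemma exists_insert_degreeDeviation_nibbleDegree_le
    (h : IsSpreadFractionalMatching E w I V r δ) (hr : 1 ≤ r) {ε c C : ℝ} (hε : 0 < ε)
    (hc₀ : 0 < c) (hc : c ≤ Real.exp (-(2 * r / ε))) (hC₀ : 0 ≤ C) (hC : 4 * r ^ 2 ≤ C * (ε * c))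
    (hδ : 0 < δ) (hδr : 2 * r ^ 2 * δ ≤ 1) (hδC : 32 * r ^ 4 * δ * Real.exp C ≤ ε * c ^ 2)
    (hN : 1 ≤ δ * (ε * #V)) {M : Finset ι} (hMI : M ⊆ I)
    (hM : (M : Set ι).PairwiseDisjoint E) (htN : r * #M ≤ (1 - ε) * #V)
    (hdev : degreeDeviation E w {j ∈ I | E j ⊆ V \ M.biUnion E} (V \ M.biUnion E)
        (nibbleDegree r #V #M) ≤ 8 * r ^ 4 * δ * #M * (1 + C / #V) ^ #M) :
    ∃ M' ⊆ I, #M' = #M + 1 ∧ (M' : Set ι).PairwiseDisjoint E ∧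
      degreeDeviation E w {j ∈ I | E j ⊆ V \ M'.biUnion E} (V \ M'.biUnion E)
          (nibbleDegree r #V (#M + 1)) ≤
        8 * r ^ 4 * δ * (#M + 1 : ℕ) * (1 + C / #V) ^ (#M + 1) := by
  have hr' : (1 : ℝ) ≤ r := by exact_mod_cast hr
  have hεN : 0 < ε * #V := pos_of_mul_pos_right (one_pos.trans_le hN) hδ.le
  have hN₀ : (0 : ℝ) < #V := pos_of_mul_pos_right hεN hε.le
  have hN2 : 2 * r ^ 2 ≤ ε * #V := by
    refine le_of_mul_le_mul_left ?_ hδ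
    linarith
  have hScard := h.cast_card_sdiff_biUnion hMI hM
  have hSε : ε * #V ≤ #(V \ M.biUnion E) := by rw [hScard]; linarith
  have hS₀ := hεN.trans_le hSε
  have hD := hc.trans (exp_le_nibbleDegree hr hε hN2 htN)
  have hD₀ := hc₀.trans_le hD
  have htV : #M ≤ #V := by
    have : (#M : ℝ) ≤ #V := by nlinarith
    exact_mod_cast this
  have hgrowth := one_add_div_pow_le_exp hC₀ htV
  obtain ⟨M', hM'I, hM'card, hM', hdev'⟩ := h.exists_insert_degreeDeviation_le hr hMI hM
    (card_pos.1 (by exact_mod_cast hS₀)) (hN.trans (by gcongr)) hD₀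
    (nibbleDegree_le_one hr hN2 htN) <| hdev.trans <| by
      calc 8 * r ^ 4 * δ * #M * (1 + C / #V) ^ #M ≤ 8 * r ^ 4 * δ * #V * Real.exp C := by gcongr
        _ ≤ ε * #V * c ^ 2 / 4 := by nlinarith
        _ ≤ #(V \ M.biUnion E) * nibbleDegree r #V #M ^ 2 / 4 := by gcongr
  rw [hScard, ← nibbleDegree_succ, ← hScard] at hdev'
  have hrate : 4 * r ^ 2 / (#(V \ M.biUnion E) * nibbleDegree r #V #M) ≤ C / #V := by
    calc _ ≤ 4 * r ^ 2 / (ε * #V * c) := by gcongr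
      _ ≤ C / #V := by
        rw [div_le_div_iff₀ (by positivity) hN₀]
        nlinarith
  exact ⟨M', hM'I, hM'card, hM', hdev'.trans <|
    nibble_error_succ (by positivity) hC₀ (by positivity) hrate hdev⟩

lemma exists_matching_degreeDeviation_le (h : IsSpreadFractionalMatching E w I V r δ)
    (hdeg : ∀ v ∈ V, weightedDegree E w I v = 1) (hr : 1 ≤ r) {ε c C : ℝ} (hε : 0 < ε)
    (hc₀ : 0 < c) (hc : c ≤ Real.exp (-(2 * r / ε))) (hC₀ : 0 ≤ C) (hC : 4 * r ^ 2 ≤ C * (ε * c))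
    (hδ : 0 < δ) (hδr : 2 * r ^ 2 * δ ≤ 1) (hδC : 32 * r ^ 4 * δ * Real.exp C ≤ ε * c ^ 2)
    (hN : 1 ≤ δ * (ε * #V)) (t : ℕ) (ht : ∀ s < t, r * s ≤ (1 - ε) * #V) :
    ∃ M ⊆ I, #M = t ∧ (M : Set ι).PairwiseDisjoint E ∧
      degreeDeviation E w {j ∈ I | E j ⊆ V \ M.biUnion E} (V \ M.biUnion E)
          (nibbleDegree r #V t) ≤ 8 * r ^ 4 * δ * t * (1 + C / #V) ^ t := by
  induction t with
  | zero =>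
    refine ⟨∅, empty_subset I, rfl, by simp, ?_⟩
    have hI : {j ∈ I | E j ⊆ V} = I := filter_true_of_mem h.subset
    have hdev : degreeDeviation E w I V 1 = 0 :=
      sum_eq_zero fun v hv ↦ by rw [hdeg v hv, sub_self, zero_pow two_ne_zero]
    simp [nibbleDegree, hI, hdev]
  | succ t ih =>
    obtain ⟨M, hMI, rfl, hM, hdev⟩ := ih fun s hs ↦ ht s (hs.trans (lt_add_one t))
    exact h.exists_insert_degreeDeviation_nibbleDegree_le hr hε hc₀ hc hC₀ hC hδ hδr hδC hN hMI hM
      (ht _ (lt_add_one #M)) hdev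

end IsSpreadFractionalMatching

theorem exists_nearly_perfect_matching {r : ℕ} (hr : 1 ≤ r) {ε : ℝ} (hε : 0 < ε) :
    ∃ δ : ℝ, 0 < δ ∧ ∃ N₀ : ℕ, ∀ {α ι : Type*} [DecidableEq α] {E : ι → Finset α} {w : ι → ℝ}
      {I : Finset ι} {V : Finset α}, IsSpreadFractionalMatching E w I V r δ →
      (∀ v ∈ V, weightedDegree E w I v = 1) → N₀ ≤ #V →
      ∃ M ⊆ I, (M : Set ι).PairwiseDisjoint E ∧ (1 - ε) * (#V / r) ≤ #M := by
  have hr' : (0 : ℝ) < r := by exact_mod_cast hr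
  set c := Real.exp (-(2 * r / ε))
  have hc₀ : 0 < c := Real.exp_pos _
  set C := 4 * (r : ℝ) ^ 2 / (ε * c)
  have hC_mul : C * (ε * c) = 4 * r ^ 2 := div_mul_cancel₀ _ (by positivity)
  set δ := min (1 / (2 * (r : ℝ) ^ 2)) (ε * c ^ 2 / (32 * r ^ 4 * Real.exp C))
  have hδ₀ : 0 < δ := lt_min (by positivity) (by positivity)
  have hδr : 2 * r ^ 2 * δ ≤ 1 := (le_div_iff₀' (by positivity)).1 (min_le_left _ _)
  have hδC : 32 * r ^ 4 * Real.exp C * δ ≤ ε * c ^ 2 :=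
    (le_div_iff₀' (by positivity)).1 (min_le_right _ _)
  refine ⟨δ, hδ₀, ⌈1 / (δ * ε)⌉₊, fun {α ι _ E w I V} h hdeg hN ↦ ?_⟩
  have hN' : 1 ≤ δ * (ε * #V) := by
    rw [← mul_assoc, ← div_le_iff₀' (by positivity)]
    exact Nat.ceil_le.1 hN
  obtain ⟨M, hMI, hMcard, hM, -⟩ := h.exists_matching_degreeDeviation_le hdeg hr hε hc₀ le_rfl
    (by positivity) hC_mul.ge hδ₀ hδr (by linarith) hN' ⌈(1 - ε) * (#V / r)⌉₊ fun s hs ↦ by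
      rw [Nat.lt_ceil, mul_div_assoc', lt_div_iff₀' hr'] at hs
      exact hs.le
  exact ⟨M, hMI, hM, hMcard ▸ Nat.le_ceil _⟩

end Nibble

/-! ### Fractional clique decompositions of dense graphs -/

section EdgeGadget

variable {V : Type*} [DecidableEq V]

/-- Inside a `(k + 2)`-clique, giving each `k`-clique `K` the weight `edgeGadget k K e` puts total
weight `1` on the edge `e` and `0` on every other edge. The weight depends only on the number of
endpoints of `e` outside `K`. -/
noncomputable def edgeGadget (k : ℕ) (K e : Finset V) : ℝ :=
  2 / (k * (k - 1)) - #(e \ K) / (k - 1) + (#(e \ K)).choose 2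

lemma abs_edgeGadget_le_one {k : ℕ} (hk : 2 ≤ k) {e : Finset V} (he : #e = 2) (K : Finset V) :
    |edgeGadget k K e| ≤ 1 := by
  have hk₂ : (2 : ℝ) ≤ k := by exact_mod_cast hk
  have hpos : (0 : ℝ) < k - 1 := by linarith
  have hle : #(e \ K) ≤ 2 := he ▸ card_le_card sdiff_subset
  have hinv : 1 / (k - 1 : ℝ) ≤ 1 := (div_le_one hpos).2 (by linarith)
  have hnonneg : 0 ≤ 2 / (k * (k - 1) : ℝ) := by positivity
  have hmono : 2 / (k * (k - 1) : ℝ) ≤ 1 / (k - 1) := by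
    rw [div_le_div_iff₀ (by positivity) hpos]
    nlinarith
  have htwo : 2 / (k - 1 : ℝ) = 2 * (1 / (k - 1)) := by ring
  unfold edgeGadget
  rw [abs_le]
  interval_cases #(e \ K) <;> norm_num at * <;> constructor <;> linarith

variable {m : ℕ}

lemma card_filter_powersetCard_disjoint {Q g J : Finset V} (hg : g ⊆ Q) (hJ : J ⊆ Q)
    (hgJ : Disjoint g J) (hgm : #g ≤ m) :
    #{K ∈ Q.powersetCard m | g ⊆ K ∧ Disjoint J K} = (#Q - #J - #g).choose (m - #g) := by
  rw [← card_sdiff_of_subset hJ, ← card_filter_powersetCard_subset g (Q \ J) m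
    (subset_sdiff.2 ⟨hg, hgJ⟩) hgm]
  congr 1
  ext K
  simp only [mem_filter, mem_powersetCard, subset_sdiff, disjoint_comm (a := J)]
  tauto

lemma sum_choose_card_sdiff {Q g e : Finset V} (hg : g ⊆ Q) (he : e ⊆ Q) (hgm : #g ≤ m) (j : ℕ) :
    ∑ K ∈ Q.powersetCard m with g ⊆ K, (#(e \ K)).choose j =
      (#(e \ g)).choose j * (#Q - j - #g).choose (m - #g) := by
  have habove : ∀ K ∈ {K ∈ Q.powersetCard m | g ⊆ K}, (#(e \ K)).choose j =
      #(((e \ g).powersetCard j).bipartiteAbove (fun K J : Finset V ↦ Disjoint J K) K) := by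
    intro K hK
    rw [← card_powersetCard]
    congr 1
    ext J
    have hgK := (mem_filter.1 hK).2
    simp only [mem_powersetCard, bipartiteAbove, mem_filter, subset_sdiff]
    exact ⟨fun ⟨⟨hJe, hJK⟩, hj⟩ ↦ ⟨⟨⟨hJe, hJK.mono_right hgK⟩, hj⟩, hJK⟩,
      fun ⟨⟨⟨hJe, _⟩, hj⟩, hJK⟩ ↦ ⟨⟨hJe, hJK⟩, hj⟩⟩
  rw [sum_congr rfl habove, sum_card_bipartiteAbove_eq_sum_card_bipartiteBelow,
    ← card_powersetCard, ← smul_eq_mul]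
  refine sum_const_nat fun J hJ ↦ ?_
  obtain ⟨hJsub, rfl⟩ := mem_powersetCard.1 hJ
  obtain ⟨hJe, hJg⟩ := subset_sdiff.1 hJsub
  rw [bipartiteBelow, filter_filter]
  exact card_filter_powersetCard_disjoint hg (hJe.trans he) hJg.symm hgm

lemma sum_edgeGadget {k : ℕ} (hk : 2 ≤ k) {Q g e : Finset V} (hQ : #Q = k + 2) (hgQ : g ⊆ Q)
    (heQ : e ⊆ Q) (hg : #g = 2) (he : #e = 2) :
    ∑ K ∈ Q.powersetCard k with g ⊆ K, edgeGadget k K e = if e = g then 1 else 0 := by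
  obtain ⟨d, rfl⟩ := Nat.exists_eq_add_of_le' hk
  have hsum (j : ℕ) : ∑ K ∈ Q.powersetCard (d + 2) with g ⊆ K, ((#(e \ K)).choose j : ℝ) =
      (#(e \ g)).choose j * (d + 2 - j).choose d := by
    rw [← Nat.cast_sum, sum_choose_card_sdiff hgQ heQ (by omega), hQ, hg]
    push_cast
    congr 3
    omega
  have hcard : (#{K ∈ Q.powersetCard (d + 2) | g ⊆ K} : ℝ) = (d + 2) * (d + 1) / 2 := by
    rw [card_filter_powersetCard_subset g Q _ hgQ (by omega), hQ, hg, Nat.add_sub_cancel,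
      Nat.add_sub_cancel, Nat.choose_symm_add, Nat.cast_choose_two]
    push_cast
    ring
  have hfirst : ∑ K ∈ Q.powersetCard (d + 2) with g ⊆ K, (#(e \ K) : ℝ) = #(e \ g) * (d + 1) := by
    simpa using hsum 1
  have hsecond : ∑ K ∈ Q.powersetCard (d + 2) with g ⊆ K, ((#(e \ K)).choose 2 : ℝ) =
      (#(e \ g)).choose 2 := by simpa using hsum 2
  have hpred : ((d + 2 : ℕ) : ℝ) - 1 = d + 1 := by push_cast; ring
  simp only [edgeGadget, sum_add_distrib, sum_sub_distrib, ← sum_div, sum_const, nsmul_eq_mul,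
    hcard, hfirst, hsecond, hpred]
  have hle : #(e \ g) ≤ 2 := he ▸ card_le_card sdiff_subset
  have hzero : #(e \ g) = 0 ↔ e = g := by
    rw [card_eq_zero, sdiff_eq_empty_iff_subset]
    exact ⟨fun h ↦ eq_of_subset_of_card_le h (by omega), fun h ↦ h.subset⟩
  rw [if_congr hzero.symm rfl rfl, Nat.cast_choose_two]
  interval_cases #(e \ g) <;>
    simp only [reduceIte, one_ne_zero, OfNat.ofNat_ne_zero] <;> push_cast <;> field_simp <;> ring

end EdgeGadget

section FractionalDecomposition

variable {V : Type*} [Fintype V] [DecidableEq V] (G : SimpleGraph V) [DecidableRel G.Adj]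

/-- The cliques of `G` on `m` vertices that contain the set `T`. -/
def cliquesContaining (m : ℕ) (T : Finset V) : Finset (Finset V) := {K ∈ G.cliqueFinset m | T ⊆ K}

variable {G} {m : ℕ} {T K : Finset V}

lemma mem_cliquesContaining : K ∈ cliquesContaining G m T ↔ G.IsNClique m K ∧ T ⊆ K := by
  simp [cliquesContaining]

lemma card_cliquesContaining_le (hTm : #T ≤ m) :
    #(cliquesContaining G m T) ≤ (Fintype.card V - #T).choose (m - #T) := by
  rw [← card_univ, ← card_filter_powersetCard_subset T univ m (subset_univ T) hTm]
  refine card_le_card fun K hK ↦ ?_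
  obtain ⟨hclique, hTK⟩ := mem_cliquesContaining.1 hK
  exact mem_filter.2 ⟨mem_powersetCard_univ.2 hclique.card_eq, hTK⟩

lemma le_card_common_neighbors {Δ : ℝ} (hdeg : ∀ v, (Fintype.card V : ℝ) - Δ ≤ G.degree v)
    (K : Finset V) : (Fintype.card V : ℝ) - #K * Δ ≤ #{x | ∀ v ∈ K, G.Adj v x} := by
  have hcompl : ({x | ∀ v ∈ K, G.Adj v x} : Finset V)ᶜ =
      K.biUnion fun v ↦ (G.neighborFinset v)ᶜ := by
    ext x
    simp
  have hbound : (#({x | ∀ v ∈ K, G.Adj v x} : Finset V)ᶜ : ℝ) ≤ #K * Δ := by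
    rw [hcompl, ← nsmul_eq_mul]
    refine (Nat.cast_le.2 card_biUnion_le).trans ?_
    push_cast
    refine sum_le_card_nsmul _ _ _ fun v _ ↦ ?_
    rw [card_compl, Nat.cast_sub (card_le_univ _), G.card_neighborFinset_eq_degree]
    linarith [hdeg v]
  rw [card_compl, Nat.cast_sub (card_le_univ _)] at hbound
  linarith

lemma card_common_neighbors_le (hK : K ∈ cliquesContaining G m T) :
    #{x | ∀ v ∈ K, G.Adj v x} ≤
      #((cliquesContaining G (m + 1) T).bipartiteAbove (fun K L : Finset V ↦ K ⊆ L) K) := by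
  obtain ⟨hclique, hTK⟩ := mem_cliquesContaining.1 hK
  have hout : ∀ x ∈ ({x | ∀ v ∈ K, G.Adj v x} : Finset V), x ∉ K := fun x hx hxK ↦
    G.irrefl ((mem_filter.1 hx).2 x hxK)
  refine card_le_card_of_injOn (insert · K) (fun x hx ↦ ?_) fun x hx y _ hxy ↦
    (insert_inj (hout x hx)).1 hxy
  exact mem_filter.2 ⟨mem_cliquesContaining.2
    ⟨hclique.insert fun v hv ↦ ((mem_filter.1 hx).2 v hv).symm,
      hTK.trans (subset_insert _ _)⟩, subset_insert _ _⟩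

lemma card_cliques_below_le (hK : K ∈ cliquesContaining G (m + 1) T) :
    #((cliquesContaining G m T).bipartiteBelow (fun K L : Finset V ↦ K ⊆ L) K) ≤ m + 1 - #T := by
  obtain ⟨hclique, hTK⟩ := mem_cliquesContaining.1 hK
  rw [← hclique.card_eq, ← card_sdiff_of_subset hTK]
  refine (card_le_card fun L hL ↦ ?_).trans (card_image_le (f := K.erase))
  obtain ⟨hL, hLK⟩ := mem_filter.1 hL
  obtain ⟨hLclique, hTL⟩ := mem_cliquesContaining.1 hL
  obtain ⟨x, hxK, hxL⟩ := exists_mem_notMem_of_card_lt_card (s := L) (t := K)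
    (by rw [hLclique.card_eq, hclique.card_eq]; exact lt_add_one m)
  refine mem_image.2 ⟨x, mem_sdiff.2 ⟨hxK, fun hxT ↦ hxL (hTL hxT)⟩, ?_⟩
  refine (eq_of_subset_of_card_le (subset_erase.2 ⟨hLK, hxL⟩) ?_).symm
  rw [card_erase_of_mem hxK, hclique.card_eq, hLclique.card_eq, Nat.add_sub_cancel]

lemma card_cliquesContaining_mul_le {Δ : ℝ} (hdeg : ∀ v, (Fintype.card V : ℝ) - Δ ≤ G.degree v) :
    #(cliquesContaining G m T) * (Fintype.card V - m * Δ) ≤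
      #(cliquesContaining G (m + 1) T) * (m + 1 - #T : ℕ) := by
  suffices #(cliquesContaining G m T) • (Fintype.card V - m * Δ) ≤
      #(cliquesContaining G (m + 1) T) • ((m + 1 - #T : ℕ) : ℝ) by
    simpa only [nsmul_eq_mul] using this
  refine card_nsmul_le_card_nsmul (fun K L : Finset V ↦ K ⊆ L) (fun K hK ↦ ?_) fun K hK ↦ ?_
  · have hcommon := le_card_common_neighbors hdeg K
    rw [(mem_cliquesContaining.1 hK).1.card_eq] at hcommon
    exact hcommon.trans (Nat.cast_le.2 (card_common_neighbors_le hK))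
  · exact Nat.cast_le.2 (card_cliques_below_le hK)

lemma cast_choose_sub_succ_mul {n t : ℕ} (htm : t ≤ m) (hmn : m ≤ n) :
    ((n - t).choose (m + 1 - t) * (m + 1 - t : ℕ) : ℝ) = (n - t).choose (m - t) * (n - m) := by
  rw [Nat.sub_add_comm htm, ← Nat.cast_mul, Nat.choose_succ_right_eq,
    show n - t - (m - t) = n - m by omega, Nat.cast_mul, Nat.cast_sub hmn]

lemma one_sub_mul_choose_le_card_cliquesContaining {M : ℕ} {θ : ℝ} (hθ : 0 ≤ θ)
    (hM : M ≤ Fintype.card V)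
    (hdeg : ∀ v, (Fintype.card V : ℝ) - (1 + θ * (Fintype.card V - M)) ≤ G.degree v)
    (hT : G.IsClique T) (hTm : #T ≤ m) (hmM : m ≤ M) :
    (1 - m.choose 2 * θ) * (Fintype.card V - #T).choose (m - #T) ≤
      #(cliquesContaining G m T) := by
  induction m, hTm using Nat.le_induction with
  | base =>
    have hone : (1 : ℝ) ≤ #(cliquesContaining G #T T) := by
      exact_mod_cast card_pos.2 ⟨T, mem_cliquesContaining.2 ⟨⟨hT, rfl⟩, Subset.rfl⟩⟩
    have : 0 ≤ ((#T).choose 2 : ℝ) * θ := by positivity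
    simp only [tsub_self, Nat.choose_zero_right, Nat.cast_one, mul_one]
    linarith
  | succ m hTm ih =>
    set n := Fintype.card V
    have hchoose : ((m + 1).choose 2 : ℝ) = m + m.choose 2 := by simp [Nat.choose_succ_succ' m 1]
    rcases lt_or_ge (1 - m * θ) 0 with hneg | hpos
    · refine le_trans (mul_nonpos_of_nonpos_of_nonneg ?_ (by positivity)) (by positivity)
      have : 0 ≤ (m.choose 2 : ℝ) * θ := by positivity
      linear_combination -θ * hchoose + hneg.le + this
    have hmn : (m : ℝ) ≤ n := by exact_mod_cast (m.lt_succ_self.le.trans hmM).trans hM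
    have hmul : (0 : ℝ) < (m + 1 - #T : ℕ) := by rw [Nat.sub_add_comm hTm]; positivity
    have hprod : 1 - (m + 1).choose 2 * θ ≤ (1 - m.choose 2 * θ) * (1 - m * θ) := by
      have : 0 ≤ (m.choose 2 : ℝ) * θ * (m * θ) := by positivity
      linear_combination -θ * hchoose + this
    have hext : (n - m : ℝ) * (1 - m * θ) ≤ n - m * (1 + θ * (n - M)) := by
      have : m * θ * (n - M) ≤ m * θ * (n - m : ℝ) := by gcongr; exact m.lt_succ_self.le.trans hmM
      linear_combination this
    refine le_of_mul_le_mul_right ?_ hmul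
    calc (1 - (m + 1).choose 2 * θ) * (n - #T).choose (m + 1 - #T) * (m + 1 - #T : ℕ)
        = (1 - (m + 1).choose 2 * θ) * ((n - #T).choose (m - #T) * (n - m)) := by
          rw [mul_assoc, cast_choose_sub_succ_mul hTm (by exact_mod_cast hmn)]
      _ ≤ (1 - m.choose 2 * θ) * (1 - m * θ) * ((n - #T).choose (m - #T) * (n - m)) :=
          mul_le_mul_of_nonneg_right hprod (mul_nonneg (by positivity) (by linarith))
      _ = (1 - m.choose 2 * θ) * (n - #T).choose (m - #T) * ((n - m) * (1 - m * θ)) := by ring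
      _ ≤ #(cliquesContaining G m T) * ((n - m) * (1 - m * θ)) :=
          mul_le_mul_of_nonneg_right (ih (by omega)) (mul_nonneg (by linarith) hpos)
      _ ≤ #(cliquesContaining G m T) * (n - m * (1 + θ * (n - M))) := by gcongr
      _ ≤ #(cliquesContaining G (m + 1) T) * (m + 1 - #T : ℕ) := card_cliquesContaining_mul_le hdeg

/-- Redistributing inside every `(k + 2)`-clique the prescribed weights `y e` of its edges: the
resulting change of the weight of the `k`-clique `K`. -/
noncomputable def cliqueCorrection (G : SimpleGraph V) [DecidableRel G.Adj] (k : ℕ)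
    (y : Finset V → ℝ) (K : Finset V) : ℝ :=
  ∑ Q ∈ cliquesContaining G (k + 2) K, ∑ e ∈ Q.powersetCard 2, y e * edgeGadget k K e

variable {k : ℕ} {y : Finset V → ℝ}

lemma sum_cliqueCorrection (hk : 2 ≤ k) {g : Finset V} (hg : #g = 2) :
    ∑ K ∈ cliquesContaining G k g, cliqueCorrection G k y K =
      #(cliquesContaining G (k + 2) g) * y g := by
  have hswap : ∀ K Q, K ∈ cliquesContaining G k g ∧ Q ∈ cliquesContaining G (k + 2) K ↔
      K ∈ {K ∈ Q.powersetCard k | g ⊆ K} ∧ Q ∈ cliquesContaining G (k + 2) g := fun K Q ↦ by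
    simp only [mem_cliquesContaining, mem_filter, mem_powersetCard]
    exact ⟨fun ⟨⟨hK, hgK⟩, hQ, hKQ⟩ ↦ ⟨⟨⟨hKQ, hK.card_eq⟩, hgK⟩, hQ, hgK.trans hKQ⟩,
      fun ⟨⟨⟨hKQ, hK⟩, hgK⟩, hQ, _⟩ ↦ ⟨⟨⟨hQ.isClique.subset hKQ, hK⟩, hgK⟩, hQ, hKQ⟩⟩
  simp only [cliqueCorrection]
  rw [sum_comm' hswap, ← nsmul_eq_mul]
  refine sum_eq_card_nsmul fun Q hQ ↦ ?_
  obtain ⟨hQ, hgQ⟩ := mem_cliquesContaining.1 hQ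
  calc ∑ K ∈ Q.powersetCard k with g ⊆ K, ∑ e ∈ Q.powersetCard 2, y e * edgeGadget k K e
      = ∑ e ∈ Q.powersetCard 2, y e * ∑ K ∈ Q.powersetCard k with g ⊆ K, edgeGadget k K e := by
        rw [sum_comm]
        simp only [mul_sum]
    _ = ∑ e ∈ Q.powersetCard 2, y e * if e = g then 1 else 0 := sum_congr rfl fun e he ↦ by
        obtain ⟨heQ, he⟩ := mem_powersetCard.1 he
        rw [sum_edgeGadget hk hQ.card_eq hgQ heQ hg he]
    _ = y g := by simp [hgQ, hg]

lemma abs_cliqueCorrection_le (hk : 2 ≤ k) {Y : ℝ} (hY : 0 ≤ Y)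
    (hy : ∀ e, G.IsNClique 2 e → |y e| ≤ Y) (hK : #K = k) :
    |cliqueCorrection G k y K| ≤ (Fintype.card V - k).choose 2 * ((k + 2).choose 2 * Y) := by
  have hclique : ∀ Q ∈ cliquesContaining G (k + 2) K,
      |∑ e ∈ Q.powersetCard 2, y e * edgeGadget k K e| ≤ (k + 2).choose 2 * Y := by
    intro Q hQ
    obtain ⟨hQ, -⟩ := mem_cliquesContaining.1 hQ
    rw [← hQ.card_eq, ← card_powersetCard, ← nsmul_eq_mul]
    refine (abs_sum_le_sum_abs _ _).trans (sum_le_card_nsmul _ _ _ fun e he ↦ ?_)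
    obtain ⟨heQ, he⟩ := mem_powersetCard.1 he
    rw [abs_mul]
    exact (mul_le_of_le_one_right (abs_nonneg _) (abs_edgeGadget_le_one hk he K)).trans
      (hy e ⟨hQ.isClique.subset heQ, he⟩)
  refine (abs_sum_le_sum_abs _ _).trans ((sum_le_card_nsmul _ _ _ hclique).trans ?_)
  rw [nsmul_eq_mul]
  have hcard := card_cliquesContaining_le (G := G) (T := K) (m := k + 2) (by omega)
  rw [hK, Nat.add_sub_cancel_left] at hcard
  gcongr

/-- A fractional `K_k`-decomposition of `G`: nonnegative weights on the vertex sets of its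
`k`-cliques (extended by `0` to all sets of vertices) such that the cliques through each edge of `G`
have total weight `1`. -/
structure IsFractionalCliqueDecomposition (G : SimpleGraph V) (k : ℕ) (W : Finset V → ℝ) :
    Prop where
  nonneg : ∀ K, 0 ≤ W K
  eq_zero : ∀ K, ¬G.IsNClique k K → W K = 0
  sum_eq_one : ∀ u v, G.Adj u v → ∑ K with {u, v} ⊆ K, W K = 1

/-- The weight to be added to the edge `e` through every `(k + 2)`-clique containing it in order to
repair the uniform weight `1 / (n - 2).choose (k - 2)` on the `k`-cliques. -/
noncomputable def edgeCorrection (G : SimpleGraph V) [DecidableRel G.Adj] (k : ℕ)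
    (e : Finset V) : ℝ :=
  (1 - #(cliquesContaining G k e) / (Fintype.card V - 2).choose (k - 2)) /
    #(cliquesContaining G (k + 2) e)

/-- The uniform weight on the `k`-cliques, corrected so that the cliques through each edge have
total weight exactly `1`. -/
noncomputable def correctedCliqueWeight (G : SimpleGraph V) [DecidableRel G.Adj] (k : ℕ)
    (K : Finset V) : ℝ :=
  if G.IsNClique k K then
    (1 : ℝ) / (Fintype.card V - 2).choose (k - 2) + cliqueCorrection G k (edgeCorrection G k) K
  else 0

lemma sum_correctedCliqueWeight (hk : 2 ≤ k) {g : Finset V} (hg : #g = 2)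
    (hpos : 0 < #(cliquesContaining G (k + 2) g)) :
    ∑ K with g ⊆ K, correctedCliqueWeight G k K = 1 := by
  have hfilter : {K ∈ ({K | g ⊆ K} : Finset (Finset V)) | G.IsNClique k K} =
      cliquesContaining G k g := by
    ext K
    simp [mem_cliquesContaining, and_comm]
  simp only [correctedCliqueWeight]
  rw [← sum_filter, hfilter, sum_add_distrib, sum_cliqueCorrection hk hg, edgeCorrection, sum_const,
    nsmul_eq_mul]
  field_simp
  ring

lemma card_cliquesContaining_triple_mul_le (hT : #T = 3) :
    #(cliquesContaining G k T) * (Fintype.card V - 2) ≤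
      (Fintype.card V - 2).choose (k - 2) * k := by
  have hn : 3 ≤ Fintype.card V := hT ▸ card_le_univ T
  rcases lt_or_ge k 3 with hk | hk
  · rw [card_eq_zero.2, zero_mul]
    · exact zero_le
    refine eq_empty_of_forall_notMem fun K hK ↦ ?_
    obtain ⟨hclique, hTK⟩ := mem_cliquesContaining.1 hK
    have := card_le_card hTK
    rw [hclique.card_eq] at this
    omega
  · have hcard := card_cliquesContaining_le (G := G) (hT.trans_le hk)
    rw [hT] at hcard
    obtain ⟨d, hd⟩ := Nat.exists_eq_add_of_le' hk
    obtain ⟨m, hm⟩ := Nat.exists_eq_add_of_le' hn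
    subst hd
    rw [hm] at hcard ⊢
    simp only [Nat.add_sub_cancel, Nat.reduceSubDiff] at hcard ⊢
    calc _ ≤ m.choose d * (m + 1) := Nat.mul_le_mul_right _ hcard
      _ = (m + 1).choose (d + 1) * (d + 1) := by rw [mul_comm, Nat.add_one_mul_choose_eq]
      _ ≤ _ := Nat.mul_le_mul_left _ (by omega)

namespace IsFractionalCliqueDecomposition

variable {W : Finset V → ℝ}

lemma sum_superset_le {w : ℝ} (hW : IsFractionalCliqueDecomposition G k W) (hw : ∀ K, W K ≤ w)
    (T : Finset V) : ∑ K with T ⊆ K, W K ≤ #(cliquesContaining G k T) * w := by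
  have hsum : ∑ K ∈ cliquesContaining G k T, W K = ∑ K with T ⊆ K, W K :=
    sum_subset (fun K hK ↦ by simpa using (mem_cliquesContaining.1 hK).2) fun K hK hKT ↦
      hW.eq_zero K fun hclique ↦ hKT (mem_cliquesContaining.2 ⟨hclique, by simpa using hK⟩)
  rw [← hsum, ← nsmul_eq_mul]
  exact sum_le_card_nsmul _ _ _ fun K _ ↦ hw K

end IsFractionalCliqueDecomposition

section DegreeDeficit

variable {θ : ℝ}

lemma choose_div_two_le_card_cliquesContaining (hθ : 0 ≤ θ) (hsmall : (k + 2).choose 2 * θ ≤ 1 / 2)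
    (hn : k + 2 ≤ Fintype.card V)
    (hdeg : ∀ v, (Fintype.card V : ℝ) - (1 + θ * (Fintype.card V - (k + 2 : ℕ))) ≤ G.degree v)
    {e : Finset V} (he : G.IsNClique 2 e) :
    ((Fintype.card V - 2).choose k : ℝ) / 2 ≤ #(cliquesContaining G (k + 2) e) := by
  have hlower := one_sub_mul_choose_le_card_cliquesContaining (m := k + 2) hθ hn hdeg he.isClique
    (by rw [he.card_eq]; omega) le_rfl
  rw [he.card_eq, Nat.add_sub_cancel] at hlower
  refine le_trans ?_ hlower
  rw [div_eq_inv_mul]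
  gcongr
  linarith

lemma abs_edgeCorrection_le (hk : 2 ≤ k) (hθ : 0 ≤ θ) (hsmall : (k + 2).choose 2 * θ ≤ 1 / 2)
    (hn : k + 2 ≤ Fintype.card V)
    (hdeg : ∀ v, (Fintype.card V : ℝ) - (1 + θ * (Fintype.card V - (k + 2 : ℕ))) ≤ G.degree v)
    {e : Finset V} (he : G.IsNClique 2 e) :
    |edgeCorrection G k e| ≤ k.choose 2 * θ / ((Fintype.card V - 2).choose k / 2) := by
  have hB : (0 : ℝ) < (Fintype.card V - 2).choose (k - 2) := by
    exact_mod_cast Nat.choose_pos (by omega)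
  have hB₂ : (0 : ℝ) < (Fintype.card V - 2).choose k := by exact_mod_cast Nat.choose_pos (by omega)
  have hlower := one_sub_mul_choose_le_card_cliquesContaining (m := k) hθ hn hdeg he.isClique
    (by rwa [he.card_eq]) (by omega)
  have hupper := card_cliquesContaining_le (G := G) (he.card_eq.trans_le hk)
  rw [he.card_eq] at hlower hupper
  have hle : (#(cliquesContaining G k e) : ℝ) / (Fintype.card V - 2).choose (k - 2) ≤ 1 :=
    (div_le_one hB).2 (by exact_mod_cast hupper)
  rw [edgeCorrection, abs_div, Nat.abs_cast, abs_of_nonneg (sub_nonneg.2 hle)]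
  gcongr
  · linarith [(le_div_iff₀ hB).2 hlower]
  · exact choose_div_two_le_card_cliquesContaining hθ hsmall hn hdeg he

lemma choose_mul_choose_eq {n : ℕ} (hk : 2 ≤ k) (hn : k + 2 ≤ n) :
    (n - 2).choose k * k.choose 2 = (n - 2).choose (k - 2) * (n - k).choose 2 := by
  rw [← Nat.choose_symm hk, Nat.choose_mul (Nat.sub_le k 2)]
  congr 2 <;> omega

lemma choose_mul_le_half (hk : 2 ≤ k) (hθ : 0 ≤ θ)
    (hsmall : 2 * k.choose 2 ^ 2 * (k + 2).choose 2 * θ ≤ 1) : (k + 2).choose 2 * θ ≤ 1 / 2 := by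
  have hchoose : (1 : ℝ) ≤ (k.choose 2 : ℝ) ^ 2 :=
    one_le_pow₀ (by exact_mod_cast Nat.choose_pos hk)
  have : 0 ≤ (k + 2).choose 2 * θ := by positivity
  nlinarith

lemma abs_cliqueCorrection_edgeCorrection_le (hk : 2 ≤ k) (hθ : 0 ≤ θ)
    (hsmall : 2 * k.choose 2 ^ 2 * (k + 2).choose 2 * θ ≤ 1) (hn : k + 2 ≤ Fintype.card V)
    (hdeg : ∀ v, (Fintype.card V : ℝ) - (1 + θ * (Fintype.card V - (k + 2 : ℕ))) ≤ G.degree v)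
    (hK : #K = k) :
    |cliqueCorrection G k (edgeCorrection G k) K| ≤
      (1 : ℝ) / (Fintype.card V - 2).choose (k - 2) := by
  have hB : (0 : ℝ) < (Fintype.card V - 2).choose (k - 2) := by
    exact_mod_cast Nat.choose_pos (by omega)
  have hB₂ : (0 : ℝ) < (Fintype.card V - 2).choose k := by exact_mod_cast Nat.choose_pos (by omega)
  have hhalf := choose_mul_le_half hk hθ hsmall
  have hidentity : ((Fintype.card V - 2).choose k * k.choose 2 : ℝ) =
      (Fintype.card V - 2).choose (k - 2) * (Fintype.card V - k).choose 2 := by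
    exact_mod_cast choose_mul_choose_eq hk hn
  refine (abs_cliqueCorrection_le hk (by positivity)
    (fun e he ↦ abs_edgeCorrection_le hk hθ hhalf hn hdeg he) hK).trans ?_
  calc ((Fintype.card V - k).choose 2 : ℝ) *
        ((k + 2).choose 2 * (k.choose 2 * θ / ((Fintype.card V - 2).choose k / 2)))
      = 2 * k.choose 2 ^ 2 * (k + 2).choose 2 * θ / (Fintype.card V - 2).choose (k - 2) := by
        field_simp
        linear_combination -((k + 2).choose 2 * k.choose 2 * θ) * hidentity
    _ ≤ 1 / (Fintype.card V - 2).choose (k - 2) := by gcongr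

lemma correctedCliqueWeight_le (hk : 2 ≤ k) (hθ : 0 ≤ θ)
    (hsmall : 2 * k.choose 2 ^ 2 * (k + 2).choose 2 * θ ≤ 1) (hn : k + 2 ≤ Fintype.card V)
    (hdeg : ∀ v, (Fintype.card V : ℝ) - (1 + θ * (Fintype.card V - (k + 2 : ℕ))) ≤ G.degree v)
    (K : Finset V) :
    correctedCliqueWeight G k K ≤ 2 / (Fintype.card V - 2).choose (k - 2) := by
  rw [correctedCliqueWeight]
  split_ifs with hK
  · have hle := (abs_le.1 (abs_cliqueCorrection_edgeCorrection_le hk hθ hsmall hn hdeg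
      hK.card_eq)).2
    calc _ ≤ (1 : ℝ) / (Fintype.card V - 2).choose (k - 2) +
          1 / (Fintype.card V - 2).choose (k - 2) := by gcongr
      _ = 2 / (Fintype.card V - 2).choose (k - 2) := by ring
  · positivity

theorem isFractionalCliqueDecomposition_correctedCliqueWeight (hk : 2 ≤ k) (hθ : 0 ≤ θ)
    (hsmall : 2 * k.choose 2 ^ 2 * (k + 2).choose 2 * θ ≤ 1) (hn : k + 2 ≤ Fintype.card V)
    (hdeg : ∀ v, (Fintype.card V : ℝ) - (1 + θ * (Fintype.card V - (k + 2 : ℕ))) ≤ G.degree v) :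
    IsFractionalCliqueDecomposition G k (correctedCliqueWeight G k) where
  nonneg K := by
    rw [correctedCliqueWeight]
    split_ifs with hK
    · linarith [(abs_le.1 (abs_cliqueCorrection_edgeCorrection_le hk hθ hsmall hn hdeg
        hK.card_eq)).1]
    · exact le_rfl
  eq_zero K hK := if_neg hK
  sum_eq_one u v huv := by
    refine sum_correctedCliqueWeight hk (card_pair huv.ne) ?_
    have hlower := choose_div_two_le_card_cliquesContaining hθ (choose_mul_le_half hk hθ hsmall) hn
      hdeg (e := {u, v}) ⟨by simpa using fun _ ↦ huv, card_pair huv.ne⟩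
    have hB₂ : (0 : ℝ) < (Fintype.card V - 2).choose k := by
      exact_mod_cast Nat.choose_pos (by omega)
    exact_mod_cast (half_pos hB₂).trans_le hlower

end DegreeDeficit

end FractionalDecomposition

lemma IsFractionalCliqueDecomposition.sum_superset_triple_le {V : Type*} [Fintype V]
    [DecidableEq V] {G : SimpleGraph V} {k : ℕ} {W : Finset V → ℝ} {T : Finset V}
    (hW : IsFractionalCliqueDecomposition G k W)
    (hw : ∀ K, W K ≤ 2 / (Fintype.card V - 2).choose (k - 2)) (hT : #T = 3) :
    ∑ K with T ⊆ K, W K ≤ 2 * k / (Fintype.card V - 2) := by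
  classical
  have hn : (0 : ℝ) < Fintype.card V - 2 := by
    have : 3 ≤ Fintype.card V := hT ▸ card_le_univ T
    rw [sub_pos]
    exact_mod_cast this
  have hcard : (#(cliquesContaining G k T) * (Fintype.card V - 2) : ℝ) ≤
      (Fintype.card V - 2).choose (k - 2) * k := by
    have := card_cliquesContaining_triple_mul_le (G := G) (k := k) hT
    rw [← Nat.cast_ofNat (R := ℝ), ← Nat.cast_sub (by rw [sub_pos] at hn; exact_mod_cast hn.le)]
    exact_mod_cast this
  rw [le_div_iff₀ hn]
  rcases ((Fintype.card V - 2).choose (k - 2)).eq_zero_or_pos with hB | hB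
  · have hzero : ∑ K with T ⊆ K, W K ≤ 0 := sum_nonpos fun K _ ↦ by simpa [hB] using hw K
    exact (mul_nonpos_of_nonpos_of_nonneg hzero hn.le).trans (by positivity)
  · have : (0 : ℝ) < (Fintype.card V - 2).choose (k - 2) := by exact_mod_cast hB
    calc _ ≤ #(cliquesContaining G k T) * (2 / (Fintype.card V - 2).choose (k - 2)) *
          (Fintype.card V - 2 : ℝ) := by gcongr; exact hW.sum_superset_le hw T
      _ = #(cliquesContaining G k T) * (Fintype.card V - 2) *
          (2 / (Fintype.card V - 2).choose (k - 2)) := by ring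
      _ ≤ (Fintype.card V - 2).choose (k - 2) * k * (2 / (Fintype.card V - 2).choose (k - 2)) := by
          gcongr
      _ = 2 * k := by field_simp

/-! ### From cliques to copies of a graph -/

section Copies

variable {α V : Type*} {H : SimpleGraph α} {G : SimpleGraph V} {x y : α} {a b : V}

lemma exists_mem_notMem_of_ne {e : Sym2 V} (he : e ∈ G.edgeSet) {u : Sym2 V} (hue : u ≠ e) :
    ∃ c ∈ e, c ∉ u := by
  induction e with
  | h c d =>
    by_contra! h
    exact hue ((Sym2.mem_and_mem_iff (SimpleGraph.Adj.ne he)).1 ⟨h c (by simp), h d (by simp)⟩)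

section Edges

variable [Fintype H.edgeSet] {f : H.Copy G}

/-- The set of edges of `G` used by a copy of `H` in `G`. -/
def copyEdges (f : H.Copy G) : Finset (Sym2 V) := H.edgeFinset.map f.toEmbedding.sym2Map

lemma card_copyEdges (f : H.Copy G) : #(copyEdges f) = #H.edgeFinset := card_map _

lemma coe_copyEdges (f : H.Copy G) : (copyEdges f : Set (Sym2 V)) = f.toSubgraph.edgeSet := by
  simp [copyEdges, SimpleGraph.Subgraph.edgeSet_map, SimpleGraph.Copy.toEmbedding]

lemma copyEdges_subset [Fintype G.edgeSet] (f : H.Copy G) : copyEdges f ⊆ G.edgeFinset := by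
  rw [← coe_subset, coe_copyEdges, SimpleGraph.coe_edgeFinset]
  exact f.toSubgraph.edgeSet_subset

lemma mk_mem_copyEdges : s(f x, f y) ∈ copyEdges f ↔ H.Adj x y := by
  change f.toEmbedding.sym2Map s(x, y) ∈ _ ↔ _
  rw [copyEdges, mem_map', SimpleGraph.mem_edgeFinset, SimpleGraph.mem_edgeSet]

lemma exists_packing_of_pairwiseDisjoint (hH : H.edgeSet.Nonempty)
    {M : Finset (H.Copy G)} (hM : (M : Set (H.Copy G)).PairwiseDisjoint copyEdges) :
    ∃ P : Finset G.Subgraph, (∀ c ∈ P, c.IsCopy H) ∧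
      (P : Set G.Subgraph).Pairwise (fun c d ↦ Disjoint c.edgeSet d.edgeSet) ∧ #P = #M := by
  classical
  have hdisj : ∀ f ∈ M, ∀ g ∈ M, f ≠ g → Disjoint f.toSubgraph.edgeSet g.toSubgraph.edgeSet :=
    fun f hf g hg hfg ↦ by
      rw [← coe_copyEdges, ← coe_copyEdges, disjoint_coe]
      exact hM hf hg hfg
  refine ⟨M.image fun f ↦ f.toSubgraph, ?_, ?_, card_image_of_injOn ?_⟩
  · simp only [mem_image]
    rintro _ ⟨f, -, rfl⟩
    exact ⟨f.isoToSubgraph.symm⟩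
  · simp only [coe_image]
    rintro _ ⟨f, hf, rfl⟩ _ ⟨g, hg, rfl⟩ hfg
    exact hdisj f hf g hg (ne_of_apply_ne _ hfg)
  · intro f hf g hg hfg
    by_contra hne
    have hempty := hdisj f hf g hg hne
    dsimp only at hfg
    rw [hfg, disjoint_self, SimpleGraph.Subgraph.edgeSet_map] at hempty
    exact (hH.image (Sym2.map g)).ne_empty (by simpa using hempty)

end Edges

variable [Fintype α]

/-- The set of vertices of `G` used by a copy of `H` in `G`. -/
def copyVertices (f : H.Copy G) : Finset V := univ.map f.toEmbedding

lemma mem_copyVertices {f : H.Copy G} : a ∈ copyVertices f ↔ ∃ x, f x = a := by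
  simp [copyVertices, SimpleGraph.Copy.toEmbedding]

lemma mem_copyVertices_of_mem_copyEdges [Fintype H.edgeSet] {f : H.Copy G} {e : Sym2 V}
    (he : e ∈ copyEdges f) (ha : a ∈ e) : a ∈ copyVertices f := by
  obtain ⟨e, -, rfl⟩ := mem_map.1 he
  obtain ⟨x, -, rfl⟩ := Sym2.mem_map.1 ha
  exact mem_copyVertices.2 ⟨x, rfl⟩

/-- The copy of `H` in `G` given by an injection of its vertices into a clique of `G`. -/
def copyOfIsClique (H : SimpleGraph α) (φ : α ↪ V) (hφ : G.IsClique (Set.range φ)) : H.Copy G where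
  toHom := ⟨φ, fun h ↦ hφ (Set.mem_range_self _) (Set.mem_range_self _) (φ.injective.ne h.ne)⟩
  injective' := φ.injective

lemma exists_embedding_map_univ_eq {K : Finset V} (hK : #K = Fintype.card α) (hxy : x ≠ y)
    (ha : a ∈ K) (hb : b ∈ K) (hab : a ≠ b) :
    ∃ φ : α ↪ V, univ.map φ = K ∧ φ x = a ∧ φ y = b := by
  have e : α ≃ K := Fintype.equivOfCardEq (by rw [Fintype.card_coe, hK])
  obtain ⟨g, hgx, hgy⟩ := MulAction.is_two_pretransitive_iff.1
    (Equiv.Perm.isMultiplyPretransitive α 2) hxy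
    (e.symm.injective.ne (a₁ := ⟨a, ha⟩) (a₂ := ⟨b, hb⟩) (by simpa using hab))
  refine ⟨(g.trans e).toEmbedding.trans (Function.Embedding.subtype _), ?_, ?_, ?_⟩
  · rw [← map_map, map_univ_equiv, univ_eq_attach, attach_map_val]
  · simpa using congr_arg (fun z ↦ (e z : V)) hgx
  · simpa using congr_arg (fun z ↦ (e z : V)) hgy

variable [DecidableEq V]

-- Up to the choice of a bijection between the vertices of `H` and `K`, a copy of `H` on the clique
-- `K` is a permutation of the vertices of `H`.
lemma card_copies_with_edge [DecidableEq α] [Fintype H.edgeSet] [DecidableRel H.Adj]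
    [Fintype (H.Copy G)] (hxy : x ≠ y) {K : Finset V}
    (hK : G.IsNClique (Fintype.card α) K) (ha : a ∈ K) (hb : b ∈ K) (hab : a ≠ b) :
    #{f : H.Copy G | copyVertices f = K ∧ s(a, b) ∈ copyEdges f} =
      #{π : Equiv.Perm α | H.Adj (π x) (π y)} := by
  obtain ⟨φ, hφ, rfl, rfl⟩ := exists_embedding_map_univ_eq hK.card_eq hxy ha hb hab
  have hclique (π : Equiv.Perm α) : G.IsClique (Set.range (π.symm.toEmbedding.trans φ)) := by
    rw [Function.Embedding.coe_trans, Equiv.coe_toEmbedding, EquivLike.range_comp]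
    simpa [← hφ] using hK.isClique
  have happly (π : Equiv.Perm α) (z : α) :
      copyOfIsClique H _ (hclique π) (π z) = φ z := congr_arg φ (π.symm_apply_apply z)
  symm
  refine card_nbij (fun π ↦ copyOfIsClique H _ (hclique π)) (fun π hπ ↦ ?_)
    (fun π _ σ _ hπσ ↦ ?_) fun f hf ↦ ?_
  · refine mem_filter.2 ⟨mem_univ _, ?_, ?_⟩
    · rw [← hφ]
      ext v
      simp only [mem_copyVertices, mem_map, mem_univ, true_and]
      exact ⟨fun ⟨w, h⟩ ↦ ⟨π.symm w, h⟩, fun ⟨z, h⟩ ↦ ⟨π z, (happly π z).trans h⟩⟩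
    · rw [← happly π x, ← happly π y, mk_mem_copyEdges]
      exact (mem_filter.1 hπ).2
  · ext z
    refine (copyOfIsClique H _ (hclique π)).injective ?_
    exact (happly π z).trans ((happly σ z).symm.trans (DFunLike.congr_fun hπσ (σ z)).symm)
  · obtain ⟨-, hfK, hf⟩ := mem_filter.1 hf
    have hmem (z : α) : ∃ w, f w = φ z :=
      mem_copyVertices.1 (hfK.trans hφ.symm ▸ mem_map_of_mem φ (mem_univ z))
    choose g hg using hmem
    have hinj : Function.Injective g := fun z w h ↦ φ.injective (by rw [← hg, ← hg, h])
    let π := Equiv.ofBijective g (Finite.injective_iff_bijective.1 hinj)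
    refine ⟨π, mem_filter.2 ⟨mem_univ _, ?_⟩, SimpleGraph.Copy.ext fun w ↦ ?_⟩
    · rwa [← hg, ← hg, mk_mem_copyEdges] at hf
    · obtain ⟨z, rfl⟩ := π.surjective w
      rw [happly]
      exact (hg z).symm

variable [Fintype V] {W : Finset V → ℝ}

/-- The weight of a clique spread evenly over the copies of `H` on its vertices that use a given
edge; the edge `s(x, y)` of `H` only serves to count these copies. -/
noncomputable def copyWeight [DecidableEq α] [DecidableRel H.Adj] (x y : α) (W : Finset V → ℝ)
    (f : H.Copy G) : ℝ :=
  W (copyVertices f) / #{π : Equiv.Perm α | H.Adj (π x) (π y)}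

variable [DecidableEq α] [DecidableRel H.Adj]

lemma copyWeight_nonneg (hW : IsFractionalCliqueDecomposition G (Fintype.card α) W) (f : H.Copy G) :
    0 ≤ copyWeight x y W f :=
  div_nonneg (hW.nonneg _) (Nat.cast_nonneg _)

variable [Fintype (H.Copy G)]

lemma sum_copyWeight [Fintype H.edgeSet]
    (hW : IsFractionalCliqueDecomposition G (Fintype.card α) W) (hxy : H.Adj x y) (hab : a ≠ b)
    {T : Finset V} (ha : a ∈ T) (hb : b ∈ T) :
    ∑ f : H.Copy G with T ⊆ copyVertices f ∧ s(a, b) ∈ copyEdges f, copyWeight x y W f =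
      ∑ K with T ⊆ K, W K := by
  have hpos : (0 : ℝ) < #{π : Equiv.Perm α | H.Adj (π x) (π y)} := by
    exact_mod_cast card_pos.2 ⟨1, by simpa using hxy⟩
  rw [← sum_fiberwise _ copyVertices, sum_filter]
  refine sum_congr rfl fun K _ ↦ ?_
  have hweight : ∀ f ∈ ({f | T ⊆ copyVertices f ∧ s(a, b) ∈ copyEdges f} : Finset (H.Copy G)).filter
      (copyVertices · = K), copyWeight x y W f = W K / #{π : Equiv.Perm α | H.Adj (π x) (π y)} :=
    fun f hf ↦ by rw [copyWeight, (mem_filter.1 hf).2]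
  rw [sum_eq_card_nsmul hweight, filter_filter, nsmul_eq_mul]
  split_ifs with hTK
  · by_cases hK : G.IsNClique (Fintype.card α) K
    · rw [← card_copies_with_edge hxy.ne hK (hTK ha) (hTK hb) hab] at hpos ⊢
      rw [filter_congr (q := fun f : H.Copy G ↦ copyVertices f = K ∧ s(a, b) ∈ copyEdges f)
        fun f _ ↦ by grind, mul_div_cancel₀ _ hpos.ne']
    · rw [hW.eq_zero K hK, zero_div, mul_zero]
  · rw [filter_eq_empty_iff.2 fun f _ ⟨⟨hTf, _⟩, hfK⟩ ↦ hTK (hfK ▸ hTf), card_empty, Nat.cast_zero,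
      zero_mul]

lemma weightedDegree_copyWeight [Fintype H.edgeSet]
    (hW : IsFractionalCliqueDecomposition G (Fintype.card α) W) (hxy : H.Adj x y)
    (hab : G.Adj a b) :
    weightedDegree copyEdges (copyWeight (H := H) (G := G) x y W) univ s(a, b) = 1 := by
  rw [← hW.sum_eq_one a b hab, ← sum_copyWeight hW hxy hab.ne (by simp) (by simp), weightedDegree]
  refine sum_congr (filter_congr fun f _ ↦ ⟨fun hf ↦ ⟨?_, hf⟩, And.right⟩) fun f _ ↦ rfl
  refine insert_subset ?_ (singleton_subset_iff.2 ?_) <;>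
    exact mem_copyVertices_of_mem_copyEdges hf (by simp)

lemma weightedCodegree_copyWeight_le [Fintype H.edgeSet]
    (hW : IsFractionalCliqueDecomposition G (Fintype.card α) W)
    (hw : ∀ K, W K ≤ 2 / (Fintype.card V - 2).choose (Fintype.card α - 2))
    (hxy : H.Adj x y) {u v : Sym2 V} (hu : u ∈ G.edgeSet) (hv : v ∈ G.edgeSet) :
    weightedCodegree copyEdges (copyWeight (H := H) (G := G) x y W) univ u v ≤
      2 * Fintype.card α / (Fintype.card V - 2) := by
  induction u with | h a b
  have hab : a ≠ b := SimpleGraph.Adj.ne hu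
  rcases eq_or_ne s(a, b) v with rfl | hne
  · have hn : (2 : ℝ) ≤ Fintype.card V := by exact_mod_cast card_pair hab ▸ card_le_univ {a, b}
    simp only [weightedCodegree, mem_offDiag, ne_eq, not_true_eq_false, and_false, filter_false,
      sum_empty]
    exact div_nonneg (by positivity) (sub_nonneg.2 hn)
  · obtain ⟨c, hcv, hc⟩ := exists_mem_notMem_of_ne hv hne
    obtain ⟨hca, hcb⟩ : c ≠ a ∧ c ≠ b := by simpa using hc
    refine le_trans ?_ (hW.sum_superset_triple_le hw (card_eq_three.2
      ⟨a, b, c, hab, hca.symm, hcb.symm, rfl⟩))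
    rw [← sum_copyWeight hW hxy hab (by simp) (by simp), weightedCodegree]
    refine sum_le_sum_of_subset_of_nonneg (fun f hf ↦ ?_) fun f _ _ ↦ copyWeight_nonneg hW f
    obtain ⟨hfab, hfv, -⟩ := mem_offDiag.1 (mem_filter.1 hf).2
    refine mem_filter.2 ⟨mem_univ _, ?_, hfab⟩
    simp only [insert_subset_iff, singleton_subset_iff]
    exact ⟨mem_copyVertices_of_mem_copyEdges hfab (by simp),
      mem_copyVertices_of_mem_copyEdges hfab (by simp), mem_copyVertices_of_mem_copyEdges hfv hcv⟩

lemma isSpreadFractionalMatching_copyEdges [Fintype H.edgeSet] [DecidableRel G.Adj]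
    (hW : IsFractionalCliqueDecomposition G (Fintype.card α) W)
    (hw : ∀ K, W K ≤ 2 / (Fintype.card V - 2).choose (Fintype.card α - 2)) (hxy : H.Adj x y) :
    IsSpreadFractionalMatching copyEdges (copyWeight (H := H) (G := G) x y W) univ G.edgeFinset
      #H.edgeFinset (2 * Fintype.card α / (Fintype.card V - 2)) where
  nonneg f _ := copyWeight_nonneg hW f
  subset f _ := copyEdges_subset f
  card_eq f _ := card_copyEdges f
  degree_le_one e he := by
    induction e with | h a b
    exact (weightedDegree_copyWeight hW hxy (SimpleGraph.mem_edgeFinset.1 he)).le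
  codegree_le u hu v hv := weightedCodegree_copyWeight_le hW hw hxy
    (SimpleGraph.mem_edgeFinset.1 hu) (SimpleGraph.mem_edgeFinset.1 hv)

end Copies

lemma exists_packing_of_isFractionalCliqueDecomposition {α : Type*} [Fintype α]
    {H : SimpleGraph α} (hH : H.edgeSet.Nonempty) {ε : ℝ} (hε : 0 < ε) :
    ∃ δ : ℝ, 0 < δ ∧ ∃ N₀ : ℕ, ∀ {V : Type*} [Fintype V] [DecidableEq V] {G : SimpleGraph V}
      {W : Finset V → ℝ}, IsFractionalCliqueDecomposition G (Fintype.card α) W →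
      (∀ K, W K ≤ 2 / (Fintype.card V - 2).choose (Fintype.card α - 2)) →
      2 * Fintype.card α / (Fintype.card V - 2) ≤ δ → N₀ ≤ G.edgeSet.ncard →
      ∃ P : Finset G.Subgraph, (∀ c ∈ P, c.IsCopy H) ∧
        (P : Set G.Subgraph).Pairwise (fun c d ↦ Disjoint c.edgeSet d.edgeSet) ∧
        (1 - ε) * ((G.edgeSet.ncard : ℝ) / H.edgeSet.ncard) ≤ #P := by
  classical
  obtain ⟨⟨x, y⟩, hxy⟩ := id hH
  obtain ⟨δ, hδ, N₀, hmatching⟩ := exists_nearly_perfect_matching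
    (card_pos.2 (Set.toFinset_nonempty.2 hH)) hε
  refine ⟨δ, hδ, N₀, fun {V _ _ G W} hW hw hδV hN ↦ ?_⟩
  have := Fintype.ofFinite (H.Copy G)
  have hspread := isSpreadFractionalMatching_copyEdges hW hw hxy
  rw [Set.ncard_eq_toFinset_card'] at hN
  obtain ⟨M, -, hM, hcard⟩ := hmatching
    { hspread with codegree_le := fun u hu v hv ↦ (hspread.codegree_le u hu v hv).trans hδV }
    (fun e he ↦ by
      induction e with | h a b
      exact weightedDegree_copyWeight hW hxy (SimpleGraph.mem_edgeFinset.1 he)) hN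
  obtain ⟨P, hcopy, hdisj, hP⟩ := exists_packing_of_pairwiseDisjoint hH hM
  refine ⟨P, hcopy, hdisj, ?_⟩
  rwa [hP, Set.ncard_eq_toFinset_card', Set.ncard_eq_toFinset_card']

section MinDegree

variable {V : Type*} [Fintype V] {G : SimpleGraph V} [DecidableRel G.Adj] {k : ℕ}

lemma two_mul_choose_two_sq_mul_choose_two_le_one (hk : 1 ≤ k) :
    2 * (k.choose 2 : ℝ) ^ 2 * (k + 2).choose 2 * (2 / (k : ℝ) ^ 6) ≤ 1 := by
  have hk' : (1 : ℝ) ≤ k := by exact_mod_cast hk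
  rw [Nat.cast_choose_two, Nat.cast_choose_two, mul_div_assoc', div_le_one (by positivity)]
  push_cast
  nlinarith [mul_nonneg (pow_nonneg (sub_nonneg.2 hk') 2) (sq_nonneg ((k : ℝ) * k))]

lemma half_card_le_card_edgeFinset_of_min_degree [Nonempty V] (hk : 2 ≤ k)
    (hdeg : ∀ v, (1 - 1 / (k : ℝ) ^ 6) * (Fintype.card V - 1) ≤ G.degree v) :
    ((Fintype.card V : ℝ) - 1) / 2 ≤ #G.edgeFinset := by
  obtain ⟨v⟩ := ‹Nonempty V›
  have hk' : 1 / (k : ℝ) ^ 6 ≤ 1 / 2 := one_div_le_one_div_of_le two_pos <| by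
    exact_mod_cast hk.trans (Nat.le_self_pow (by norm_num) k)
  have hV : (1 : ℝ) ≤ Fintype.card V := by exact_mod_cast Fintype.card_pos_iff.2 ⟨v⟩
  calc ((Fintype.card V : ℝ) - 1) / 2 ≤ (1 - 1 / (k : ℝ) ^ 6) * (Fintype.card V - 1) := by
        nlinarith
    _ ≤ G.degree v := hdeg v
    _ ≤ #G.edgeFinset := by exact_mod_cast G.degree_le_card_edgeFinset v

lemma exists_isFractionalCliqueDecomposition_of_min_degree [DecidableEq V] (hk : 2 ≤ k)
    (hn : 2 * k + 3 ≤ Fintype.card V)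
    (hdeg : ∀ v, (1 - 1 / (k : ℝ) ^ 6) * (Fintype.card V - 1) ≤ G.degree v) :
    ∃ W, IsFractionalCliqueDecomposition G k W ∧
      ∀ K, W K ≤ 2 / (Fintype.card V - 2).choose (k - 2) := by
  have hn' : (2 * k + 3 : ℝ) ≤ Fintype.card V := by exact_mod_cast hn
  have hθ : (0 : ℝ) ≤ 2 / (k : ℝ) ^ 6 := by positivity
  have hsmall := two_mul_choose_two_sq_mul_choose_two_le_one (one_le_two.trans hk)
  have hdeg' (v : V) : Fintype.card V - (1 + 2 / (k : ℝ) ^ 6 * (Fintype.card V - (k + 2 : ℕ))) ≤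
      G.degree v := by
    refine le_trans ?_ (hdeg v)
    have : (0 : ℝ) ≤ 1 / (k : ℝ) ^ 6 * (Fintype.card V - (2 * k + 3)) :=
      mul_nonneg (by positivity) (sub_nonneg.2 hn')
    push_cast
    linear_combination this
  exact ⟨_, isFractionalCliqueDecomposition_correctedCliqueWeight hk hθ hsmall (by omega) hdeg',
    correctedCliqueWeight_le hk hθ hsmall (by omega) hdeg'⟩

end MinDegree

theorem h_packing_of_min_degree_general {α : Type*} [Fintype α] (H : SimpleGraph α)
    (hH : H.edgeSet.Nonempty) (ε : ℝ) (hε : 0 < ε) :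
    ∃ n₀ : ℕ, ∀ {V : Type*} [Fintype V], n₀ ≤ Fintype.card V → ∀ G : SimpleGraph V,
      (∀ v, (1 - 1 / (Fintype.card α : ℝ) ^ 6) * ((Fintype.card V : ℝ) - 1) ≤
        (G.neighborSet v).ncard) →
      ∃ P : Finset G.Subgraph, (∀ c ∈ P, c.IsCopy H) ∧
        (P : Set G.Subgraph).Pairwise (fun c d ↦ Disjoint c.edgeSet d.edgeSet) ∧
        (1 - ε) * ((G.edgeSet.ncard : ℝ) / H.edgeSet.ncard) ≤ #P := by
  classical
  obtain ⟨δ, hδ, N₀, hpacking⟩ := exists_packing_of_isFractionalCliqueDecomposition hH hε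
  set k := Fintype.card α
  have hk : 2 ≤ k := by
    obtain ⟨⟨x, y⟩, hxy : H.Adj x y⟩ := hH
    exact card_pair hxy.ne ▸ card_le_univ {x, y}
  refine ⟨2 * k + 3 + 2 * N₀ + ⌈2 * k / δ⌉₊, fun {V} _ hV G hdeg ↦ ?_⟩
  simp only [← Nat.card_coe_set_eq, Nat.card_eq_fintype_card,
    SimpleGraph.card_neighborSet_eq_degree] at hdeg
  have : Nonempty V := Fintype.card_pos_iff.1 (by omega)
  obtain ⟨W, hW, hw⟩ := exists_isFractionalCliqueDecomposition_of_min_degree hk (by omega) hdeg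
  have hV' : (2 * k + 3 + 2 * N₀ + 2 * k / δ : ℝ) ≤ Fintype.card V :=
    le_trans (by push_cast; gcongr; exact Nat.le_ceil _) (Nat.cast_le.2 hV)
  have hspread : 2 * k / (Fintype.card V - 2) ≤ δ := by
    have : (2 : ℝ) * k / δ ≤ Fintype.card V - 2 := by
      linarith [(k.cast_nonneg : (0 : ℝ) ≤ k), (N₀.cast_nonneg : (0 : ℝ) ≤ N₀)]
    exact div_le_of_le_mul₀ (le_trans (by positivity) this) hδ.le ((div_le_iff₀' hδ).1 this)
  have hedges : (N₀ : ℝ) ≤ #G.edgeFinset := by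
    have : 0 ≤ 2 * k / δ := by positivity
    linarith [half_card_le_card_edgeFinset_of_min_degree hk hdeg]
  refine hpacking hW hw hspread ?_
  rw [Set.ncard_eq_toFinset_card']
  exact_mod_cast hedges

end Packing

/-- For every integer `k ≥ 3`, every graph `H` with `k` vertices and at least one edge, and every
`ε > 0`, there exists `n₀` such that every graph `G` on `n ≥ n₀` vertices with minimum degree at
least `(1 - 1/(9k^10))·(n-1)` has an `H`-packing of size at least `(1-ε)·e(G)/e(H)`. -/
theorem h_packing_of_min_degree (k : ℕ) (hk : 3 ≤ k) (H : SimpleGraph (Fin k))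
    (hH : H.edgeSet.Nonempty) (ε : ℝ) (hε : 0 < ε) :
    ∃ n₀ : ℕ, ∀ n : ℕ, n₀ ≤ n → ∀ G : SimpleGraph (Fin n),
      (∀ v, ((1 : ℝ) - 1 / (9 * (k : ℝ) ^ 10)) * ((n : ℝ) - 1) ≤ ((G.neighborSet v).ncard : ℝ)) →
      ∃ P : Finset G.Subgraph,
        (∀ c ∈ P, c.IsCopy H) ∧
        (P : Set G.Subgraph).Pairwise (fun c d => Disjoint c.edgeSet d.edgeSet) ∧
        (1 - ε) * ((G.edgeSet.ncard : ℝ) / (H.edgeSet.ncard : ℝ)) ≤ (P.card : ℝ) := by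
  obtain ⟨n₀, hn₀⟩ := h_packing_of_min_degree_general H hH ε hε
  refine ⟨n₀, fun n hn G hdeg ↦ hn₀ (by rwa [Fintype.card_fin]) G fun v ↦ le_trans ?_ (hdeg v)⟩
  rw [Fintype.card_fin, Fintype.card_fin]
  have hn1 : (1 : ℝ) ≤ n := by exact_mod_cast v.pos
  have hk1 : (1 : ℝ) ≤ k := by exact_mod_cast hk.trans' (by norm_num)
  gcongr
  exact (pow_le_pow_right₀ hk1 (by norm_num)).trans
    (le_mul_of_one_le_left (by positivity) (by norm_num))
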